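/- arXiv:2605.02632 — 6 statements merged into one kernel-verified Lean document; each statement's English description precedes it below -/
import Mathlib

section
/- Let p be an odd prime and let a, b, c be integers with gcd(a, b, c) = 1 satisfying −5a² + b⁵ = c^(2p). Then b is odd, and there exist coprime integers m, n, not both odd, such that a = 5n(m⁴ − 10m²n² + 5n⁴) and c^p = m(m⁴ − 50m²n² + 125n⁴). In particular, 5 ∣ a. -/
/-!
In `ℤ[√-5]` the equation reads `z * star z = b ^ 5` with `z = C + a √-5` and `C = c ^ p`. The
coprimality hypothesis makes `b` odd and prime to `C`, so `z` and `star z` are coprime and the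
fifth power of the ideal `(z, b)` is `(z)`. Squares of ideals are principal here, hence `(z, b)` is
itself principal. The only units being `±1`, `z` is the fifth power of some `m + n √-5`, and
comparing coordinates gives the two formulas.

That squares of ideals are principal needs no theory of Dedekind domains: by Dirichlet
approximation, Euclidean division works after multiplying the dividend by `1` or `2`, so every
nonzero ideal is equivalent to one containing `2`; these are `(1)`, `(2)` and `(2, 1 + √-5)`, and
the last one has square `(2)`.
-/

section PrincipalIdeals

variable {R : Type*} [CommRing R]

theorem isPrincipal_of_span_singleton_mul [IsDomain R] {x : R} (hx : x ≠ 0) {I : Ideal R}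
    (h : (Ideal.span {x} * I).IsPrincipal) : I.IsPrincipal := by
  obtain ⟨y, hy⟩ := h
  rw [Ideal.submodule_span_eq] at hy
  obtain ⟨t, -, rfl⟩ : ∃ t ∈ I, x * t = y :=
    Ideal.mem_span_singleton_mul.1 (hy ▸ Ideal.mem_span_singleton_self y)
  rw [← Ideal.span_singleton_mul_span_singleton, Ideal.span_singleton_mul_right_inj hx] at hy
  exact ⟨t, hy⟩

theorem isPrincipal_pow_gcd [IsDomain R] {I : Ideal R} {m n : ℕ} (hm : (I ^ m).IsPrincipal)
    (hn : (I ^ n).IsPrincipal) : (I ^ m.gcd n).IsPrincipal := by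
  rcases eq_or_ne I ⊥ with rfl | hI
  · exact (Ideal.isPrincipalSubmonoid _).pow_mem bot_isPrincipal _
  induction m, n using Nat.gcd.induction with
  | H0 n => simpa using hn
  | H1 m n _ ih =>
    rw [Nat.gcd_rec]
    refine ih ?_ hm
    obtain ⟨x, hx⟩ : ((I ^ m) ^ (n / m)).IsPrincipal :=
      (Ideal.isPrincipalSubmonoid R).pow_mem hm _
    have hx0 : x ≠ 0 := by
      rintro rfl
      rw [Ideal.submodule_span_eq, Ideal.span_singleton_zero] at hx
      exact pow_ne_zero _ (pow_ne_zero m hI) hx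
    refine isPrincipal_of_span_singleton_mul hx0 ?_
    rwa [← Ideal.submodule_span_eq, ← hx, ← pow_mul, ← pow_add, Nat.div_add_mod]

theorem span_pair_pow_eq_span_singleton {z w b : R} {n : ℕ} (hzw : IsCoprime z w)
    (h : z * w = b ^ n) : Ideal.span {z, b} ^ n = Ideal.span {z} := by
  apply le_antisymm
  · have hb : Ideal.Quotient.mk (Ideal.span {z}) b ^ n = 0 := by
      rw [← map_pow, ← h, Ideal.Quotient.eq_zero_iff_mem]
      exact Ideal.mul_mem_right _ _ (Ideal.mem_span_singleton_self z)
    have hz : Ideal.Quotient.mk (Ideal.span {z}) z = 0 := Ideal.Quotient.mk_singleton_self z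
    rw [← Ideal.mk_ker (I := Ideal.span {z}), ← Ideal.map_eq_bot_iff_le_ker, Ideal.map_pow,
      Ideal.map_span, Set.image_pair, hz, Ideal.span_insert_zero, Ideal.span_singleton_pow, hb,
      Ideal.span_singleton_eq_bot]
  · rw [Ideal.span_singleton_le_iff_mem]
    obtain ⟨u, v, huv⟩ := hzw.pow_left (m := n)
    have hz : u * z * z ^ n + v * b ^ n = z := by rw [← h]; linear_combination z * huv
    have hmem : u * z * z ^ n + v * b ^ n ∈ Ideal.span {z, b} ^ n := add_mem
      (Ideal.mul_mem_left _ _ (Ideal.pow_mem_pow (Ideal.subset_span (by simp)) n))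
      (Ideal.mul_mem_left _ _ (Ideal.pow_mem_pow (Ideal.subset_span (by simp)) n))
    rwa [hz] at hmem

theorem exists_associated_pow_of_forall_isPrincipal_pow [IsDomain R] {m n : ℕ}
    (hR : ∀ I : Ideal R, (I ^ m).IsPrincipal) (hmn : m.Coprime n) {z w b : R}
    (hzw : IsCoprime z w) (h : z * w = b ^ n) : ∃ x : R, Associated (x ^ n) z := by
  have hpow := span_pair_pow_eq_span_singleton hzw h
  have hI : (Ideal.span {z, b}).IsPrincipal := by
    simpa [hmn.gcd_eq_one] using isPrincipal_pow_gcd (hR (Ideal.span {z, b})) ⟨z, hpow⟩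
  obtain ⟨x, hx⟩ := hI
  refine ⟨x, ?_⟩
  rw [← Ideal.span_singleton_eq_span_singleton, ← hpow, hx, ← Ideal.span_singleton_pow,
    Ideal.submodule_span_eq]

theorem exists_mem_span_singleton_mul_eq {I : Ideal R} {x c : R} (hx : x ∈ I)
    (h : ∀ y ∈ I, x ∣ c * y) :
    ∃ J : Ideal R, c ∈ J ∧ Ideal.span {c} * I = Ideal.span {x} * J := by
  let J : Ideal R := Submodule.comap (LinearMap.mulLeft R x) (Ideal.span {c} * I)
  refine ⟨J, ?_, (Ideal.eq_span_singleton_mul _ _).2 ⟨fun t ht ↦ ?_, fun _ ↦ id⟩⟩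
  · exact Ideal.mem_span_singleton_mul.2 ⟨x, hx, mul_comm c x⟩
  · obtain ⟨y, hy, rfl⟩ := Ideal.mem_span_singleton_mul.1 ht
    obtain ⟨q, hq⟩ := h y hy
    exact ⟨q, by rwa [Submodule.mem_comap, LinearMap.mulLeft_apply, ← hq], hq.symm⟩

end PrincipalIdeals

theorem exists_sq_add_mul_sq_lt_one {d : ℝ} (hd : 0 ≤ d) {n : ℕ} (hn : 0 < n)
    (hdn : 4 * d < 3 * (n + 1) ^ 2) (x y : ℝ) :
    ∃ k : ℕ, 0 < k ∧ k ≤ n ∧ ∃ r s : ℤ, (k * x - r) ^ 2 + d * (k * y - s) ^ 2 < 1 := by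
  obtain ⟨k, hk0, hkn, hs⟩ := Real.exists_nat_abs_mul_sub_round_le y hn
  refine ⟨k, hk0, hkn, round (k * x), round (k * y), ?_⟩
  have hr := abs_sub_round (k * x)
  have hx : (k * x - round (k * x)) ^ 2 ≤ (1 / 2) ^ 2 := sq_le_sq' (abs_le.1 hr).1 (abs_le.1 hr).2
  have hy : (k * y - round (k * y)) ^ 2 ≤ (1 / (n + 1)) ^ 2 :=
    sq_le_sq' (abs_le.1 hs).1 (abs_le.1 hs).2
  have hdy : d * (1 / (n + 1)) ^ 2 < 3 / 4 := by
    rw [one_div, inv_pow, ← div_eq_mul_inv, div_lt_iff₀ (by positivity)]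
    linarith
  linarith [mul_le_mul_of_nonneg_left hy hd]

section QuadraticOrder

open Zsqrtd hiding le_antisymm

variable {d : ℤ}

theorem isDomain_zsqrtd (hd : d < 0) : IsDomain (ℤ√d) :=
  have : NoZeroDivisors (ℤ√d) := ⟨fun {x y} h ↦ by
    simpa only [norm_mul, norm_zero, mul_eq_zero, norm_eq_zero_iff hd] using congrArg norm h⟩
  NoZeroDivisors.to_isDomain _

theorem norm_pos_of_ne_zero (hd : d < 0) {x : ℤ√d} (hx : x ≠ 0) : 0 < x.norm :=
  (norm_nonneg hd.le x).lt_of_ne' ((norm_eq_zero_iff hd x).not.2 hx)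

theorem exists_norm_natCast_mul_sub_lt (hd : d < 0) {n : ℕ} (hdn : 4 * -d < 3 * (n + 1) ^ 2)
    {x : ℤ√d} (hx : x ≠ 0) (y : ℤ√d) :
    ∃ k : ℕ, 0 < k ∧ k ≤ n ∧ ∃ q : ℤ√d, (k * y - q * x).norm < x.norm := by
  have hn : 0 < n := by
    by_contra! h0
    obtain rfl : n = 0 := by omega
    norm_num at hdn
    omega
  have hN : (0 : ℝ) < x.norm := mod_cast norm_pos_of_ne_zero hd hx
  obtain ⟨k, hk0, hkn, r, s, hrs⟩ := exists_sq_add_mul_sq_lt_one (d := -d) (n := n)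
    (mod_cast (neg_pos.2 hd).le) hn (mod_cast hdn)
    ((y * star x).re / x.norm) ((y * star x).im / x.norm)
  refine ⟨k, hk0, hkn, ⟨r, s⟩, ?_⟩
  have hscale : ((k * y - ⟨r, s⟩ * x).norm * x.norm : ℝ) =
      ((k * ((y * star x).re / x.norm) - r) ^ 2 + -d * (k * ((y * star x).im / x.norm) - s) ^ 2) *
        x.norm ^ 2 := by
    have hint : (k * y - ⟨r, s⟩ * x).norm * x.norm =
        (k * (y * star x).re - r * x.norm) ^ 2 - d * (k * (y * star x).im - s * x.norm) ^ 2 := by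
      simp only [norm_def, re_sub, re_mul, re_natCast, im_natCast, mul_zero, zero_mul, add_zero,
        im_sub, im_mul, re_star, im_star, mul_neg]
      ring
    rw [← Int.cast_mul, hint]
    field_simp
    push_cast
    ring
  have hlt : ((k * y - ⟨r, s⟩ * x).norm * x.norm : ℝ) < x.norm * x.norm := by
    rw [hscale, ← sq]
    exact mul_lt_of_lt_one_left (by positivity) hrs
  exact_mod_cast lt_of_mul_lt_mul_right hlt hN.le

theorem exists_forall_dvd_factorial_mul (hd : d < 0) {n : ℕ} (hdn : 4 * -d < 3 * (n + 1) ^ 2)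
    (I : Ideal (ℤ√d)) : ∃ x ∈ I, ∀ y ∈ I, x ∣ (n.factorial : ℤ√d) * y := by
  rcases eq_or_ne I ⊥ with rfl | hI
  · exact ⟨0, zero_mem _, fun y hy ↦ by rw [Ideal.mem_bot.1 hy, mul_zero]⟩
  obtain ⟨x, ⟨hxI, hx0⟩, hmin⟩ := WellFounded.has_min
    (measure fun x : ℤ√d ↦ x.norm.toNat).wf {x | x ∈ I ∧ x ≠ 0}
    (Submodule.exists_mem_ne_zero_of_ne_bot hI)
  refine ⟨x, hxI, fun y hy ↦ ?_⟩
  obtain ⟨k, hk0, hkn, q, hlt⟩ := exists_norm_natCast_mul_sub_lt hd hdn hx0 y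
  have hrem : (k : ℤ√d) * y - q * x = 0 := by
    by_contra hne
    refine hmin _ ⟨sub_mem (I.mul_mem_left _ hy) (I.mul_mem_left _ hxI), hne⟩ ?_
    exact (Int.toNat_lt_toNat (norm_pos_of_ne_zero hd hx0)).2 hlt
  have hdvd : x ∣ (k : ℤ√d) * y := ⟨q, by rw [sub_eq_zero.1 hrem, mul_comm]⟩
  exact hdvd.trans (mul_dvd_mul_right (Nat.cast_dvd_cast (Nat.dvd_factorial hk0 hkn)) y)

theorem isPrincipal_pow_of_forall_factorial_mem (hd : d < 0) {n : ℕ}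
    (hdn : 4 * -d < 3 * (n + 1) ^ 2) {m : ℕ}
    (h : ∀ J : Ideal (ℤ√d), (n.factorial : ℤ√d) ∈ J → (J ^ m).IsPrincipal) (I : Ideal (ℤ√d)) :
    (I ^ m).IsPrincipal := by
  have := isDomain_zsqrtd hd
  obtain ⟨x, hxI, hdvd⟩ := exists_forall_dvd_factorial_mul hd hdn I
  obtain ⟨J, hJ, hIJ⟩ := exists_mem_span_singleton_mul_eq hxI hdvd
  have hfac : (n.factorial : ℤ√d) ^ m ≠ 0 := pow_ne_zero m (Nat.cast_ne_zero.2 n.factorial_ne_zero)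
  apply isPrincipal_of_span_singleton_mul hfac
  rw [← Ideal.span_singleton_pow, ← mul_pow, hIJ, mul_pow]
  exact (Ideal.isPrincipalSubmonoid _).mul_mem
    (pow_mem (Ideal.span_singleton_mem_isPrincipalSubmonoid x) m) (h J hJ)

theorem exists_eq_two_mul_add (q : ℤ√d) :
    ∃ r : ℤ√d, ∃ e ∈ ({0, 1, sqrtd, 1 + sqrtd} : Set (ℤ√d)), q = 2 * r + e := by
  refine ⟨⟨q.re / 2, q.im / 2⟩, ⟨q.re % 2, q.im % 2⟩, ?_, ?_⟩
  · rcases Int.emod_two_eq_zero_or_one q.re with hr | hr <;>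
      rcases Int.emod_two_eq_zero_or_one q.im with hi | hi <;> simp [hr, hi, Zsqrtd.ext_iff]
  · ext <;> simp [Int.mul_ediv_add_emod]

theorem eq_top_or_span_two_or_span_pair_of_two_mem (hd : Odd d) {J : Ideal (ℤ√d)}
    (h2 : 2 ∈ J) : J = ⊤ ∨ J = Ideal.span {2} ∨ J = Ideal.span {2, 1 + sqrtd} := by
  have hsqrtd : sqrtd ∈ J → 1 ∈ J := fun h ↦ by
    obtain ⟨k, rfl⟩ := hd
    have hone : (1 : ℤ√(2 * k + 1)) = sqrtd * sqrtd - (k : ℤ√(2 * k + 1)) * 2 := by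
      rw [dmuld]
      push_cast
      ring
    rw [hone]
    exact sub_mem (J.mul_mem_left _ h) (J.mul_mem_left _ h2)
  by_cases h1 : 1 ∈ J
  · exact .inl ((Ideal.eq_top_iff_one J).2 h1)
  have hres : ∀ q ∈ J, ∃ r : ℤ√d, q = 2 * r ∨ 1 + sqrtd ∈ J ∧ q = 2 * r + (1 + sqrtd) := by
    intro q hq
    obtain ⟨r, e, he, rfl⟩ := exists_eq_two_mul_add q
    have heJ : e ∈ J := (J.add_mem_iff_right (J.mul_mem_right r h2)).1 hq
    refine ⟨r, ?_⟩
    rcases he with rfl | rfl | rfl | rfl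
    · simp
    · exact absurd heJ h1
    · exact absurd (hsqrtd heJ) h1
    · exact .inr ⟨heJ, rfl⟩
  by_cases hω : 1 + sqrtd ∈ J
  · have hle : Ideal.span {2, 1 + sqrtd} ≤ J := Ideal.span_le.2 (Set.pair_subset h2 hω)
    refine .inr (.inr (le_antisymm (fun q hq ↦ ?_) hle))
    obtain ⟨r, rfl | ⟨-, rfl⟩⟩ := hres q hq
    · exact Ideal.mem_span_pair.2 ⟨r, 0, by ring⟩
    · exact Ideal.mem_span_pair.2 ⟨r, 1, by ring⟩
  · have hle : Ideal.span {2} ≤ J := (Ideal.span_singleton_le_iff_mem J).2 h2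
    refine .inr (.inl (le_antisymm (fun q hq ↦ ?_) hle))
    obtain ⟨r, rfl | ⟨hω', -⟩⟩ := hres q hq
    · exact Ideal.mem_span_singleton.2 (dvd_mul_right 2 r)
    · exact absurd hω' hω

theorem span_two_one_add_sqrtd_sq (hd : d % 4 = 3) :
    Ideal.span {2, 1 + sqrtd} ^ 2 = Ideal.span {(2 : ℤ√d)} := by
  obtain ⟨k, hk⟩ : ∃ k, d = 4 * k + 3 := ⟨d / 4, by omega⟩
  have hsq : (sqrtd : ℤ√d) * sqrtd = 4 * (k : ℤ√d) + 3 := by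
    rw [dmuld]
    exact_mod_cast congrArg (Int.cast : ℤ → ℤ√d) hk
  rw [pow_two]
  apply le_antisymm
  · rw [Ideal.span_pair_mul_span_pair]
    simp only [Ideal.span_le, Set.insert_subset_iff, Set.singleton_subset_iff, SetLike.mem_coe,
      Ideal.mem_span_singleton]
    exact ⟨dvd_mul_right _ _, dvd_mul_right _ _, dvd_mul_left _ _,
      ⟨2 * (k : ℤ√d) + 2 + sqrtd, by linear_combination hsq⟩⟩
  · rw [Ideal.span_singleton_le_iff_mem]
    have h2 : 2 ∈ Ideal.span {2, (1 + sqrtd : ℤ√d)} := Ideal.subset_span (by simp)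
    have hω : 1 + sqrtd ∈ Ideal.span {2, (1 + sqrtd : ℤ√d)} := Ideal.subset_span (by simp)
    have hmem := sub_mem (sub_mem (Ideal.mul_mem_mul hω hω) (Ideal.mul_mem_mul hω h2))
      (Ideal.mul_mem_left _ (k : ℤ√d) (Ideal.mul_mem_mul h2 h2))
    have htwo : (1 + sqrtd) * (1 + sqrtd) - (1 + sqrtd) * 2 - (k : ℤ√d) * (2 * 2) = 2 := by
      linear_combination hsq
    rwa [htwo] at hmem

theorem isPrincipal_sq_zsqrtd_neg_five (I : Ideal (ℤ√(-5))) : (I ^ 2).IsPrincipal := by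
  refine isPrincipal_pow_of_forall_factorial_mem (n := 2) (by norm_num) (by norm_num) ?_ I
  intro J hJ
  rcases eq_top_or_span_two_or_span_pair_of_two_mem (by decide) (mod_cast hJ) with
    rfl | rfl | rfl
  · exact (Ideal.isPrincipalSubmonoid _).pow_mem top_isPrincipal 2
  · exact pow_mem (Ideal.span_singleton_mem_isPrincipalSubmonoid 2) 2
  · exact ⟨2, span_two_one_add_sqrtd_sq (by norm_num)⟩

theorem eq_one_or_neg_one_of_isUnit (hd : d < -1) {u : ℤ√d} (hu : IsUnit u) : u = 1 ∨ u = -1 := by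
  have hnorm := (norm_eq_one_iff' (by omega) u).2 hu
  rw [norm_def] at hnorm
  have him : u.im = 0 := by
    by_contra h
    nlinarith [mul_self_pos.2 h, mul_self_nonneg u.re]
  have hre : u.re * u.re = 1 := by simpa [him] using hnorm
  refine (mul_self_eq_one_iff.1 hre).imp (fun h ↦ ?_) (fun h ↦ ?_) <;> ext <;> simp [h, him]

theorem isCoprime_star_of_isCoprime_norm {z : ℤ√d} (h : IsCoprime z.norm (2 * z.re)) :
    IsCoprime z (star z) := by
  obtain ⟨u, v, huv⟩ := h
  have htrace : ((2 * z.re : ℤ) : ℤ√d) = z + star z := by ext <;> simp [two_mul]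
  have hcast := congrArg (Int.cast : ℤ → ℤ√d) huv
  rw [Int.cast_add, Int.cast_mul, Int.cast_mul, htrace, norm_eq_mul_conj, Int.cast_one] at hcast
  exact ⟨u * star z + v, v, by linear_combination hcast⟩

theorem exists_pow_eq_of_norm_eq_pow {n : ℕ} (hn : Odd n) {z : ℤ√(-5)} {b : ℤ}
    (hz : z.norm = b ^ n) (hb : Odd b) (hco : IsCoprime b z.re) :
    ∃ x : ℤ√(-5), x ^ n = z ∧ x.norm = b := by
  have := isDomain_zsqrtd (d := -5) (by norm_num)
  have hzz : IsCoprime z (star z) := by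
    apply isCoprime_star_of_isCoprime_norm
    exact hz ▸ ((Int.isCoprime_two_right.2 hb).mul_right hco).pow_left
  have hfac : z * star z = (b : ℤ√(-5)) ^ n := by
    rw [← norm_eq_mul_conj, hz, Int.cast_pow]
  obtain ⟨x, u, rfl⟩ := exists_associated_pow_of_forall_isPrincipal_pow
    isPrincipal_sq_zsqrtd_neg_five (Nat.coprime_two_left.2 hn) hzz hfac
  obtain ⟨y, hy⟩ : ∃ y : ℤ√(-5), y ^ n = x ^ n * u := by
    rcases eq_one_or_neg_one_of_isUnit (by norm_num) u.isUnit with hu | hu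
    · exact ⟨x, by rw [hu, mul_one]⟩
    · exact ⟨-x, by rw [hu, hn.neg_pow, mul_neg_one]⟩
  refine ⟨y, hy, hn.strictMono_pow.injective ?_⟩
  rw [← hz, ← hy]
  exact (map_pow normMonoidHom y n).symm

theorem re_pow_five (x : ℤ√d) :
    (x ^ 5).re = x.re * (x.re ^ 4 + 10 * d * x.re ^ 2 * x.im ^ 2 + 5 * d ^ 2 * x.im ^ 4) := by
  simp only [pow_succ, pow_zero, one_mul, re_mul, im_mul]
  ring

theorem im_pow_five (x : ℤ√d) :
    (x ^ 5).im = x.im * (5 * x.re ^ 4 + 10 * d * x.re ^ 2 * x.im ^ 2 + d ^ 2 * x.im ^ 4) := by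
  simp only [pow_succ, pow_zero, one_mul, re_mul, im_mul]
  ring

theorem not_odd_re_and_odd_im_of_odd_norm (hd : Odd d) {x : ℤ√d} (hx : Odd x.norm) :
    ¬(Odd x.re ∧ Odd x.im) := by
  rintro ⟨hre, him⟩
  rw [norm_def] at hx
  exact Int.not_even_iff_odd.2 hx ((hre.mul hre).sub_odd ((hd.mul him).mul him))

theorem isCoprime_re_im_of_isCoprime_norm_re {x : ℤ√d} (h : IsCoprime x.norm x.re) :
    IsCoprime x.re x.im := by
  obtain ⟨u, v, huv⟩ := h
  rw [norm_def] at huv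
  exact ⟨u * x.re + v, -u * d * x.im, by linear_combination huv⟩

end QuadraticOrder

section Integers

theorem isCoprime_of_sq_sub_mul_sq_eq_pow {a b c d : ℤ} {k : ℕ} (hd : Squarefree d) (hk : 2 ≤ k)
    (hgcd : Int.gcd (Int.gcd a b) c = 1) (h : c ^ 2 - d * a ^ 2 = b ^ k) : IsCoprime b c := by
  set g := Int.gcd b c
  have hga : IsCoprime ((g : ℤ) ^ 2) (a ^ 2) := by
    rw [Int.gcd_assoc] at hgcd
    exact (Int.isCoprime_iff_gcd_eq_one.2 hgcd).symm.pow
  have hgd : (g : ℤ) ^ 2 ∣ d * a ^ 2 := by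
    rw [show d * a ^ 2 = c ^ 2 - b ^ k by linarith]
    exact dvd_sub (pow_dvd_pow_of_dvd (Int.gcd_dvd_right b c) 2)
      ((pow_dvd_pow_of_dvd (Int.gcd_dvd_left b c) 2).trans (pow_dvd_pow b hk))
  have hgu : IsUnit (g : ℤ) := hd g (sq (g : ℤ) ▸ hga.dvd_of_dvd_mul_right hgd)
  exact Int.isCoprime_iff_gcd_eq_one.2 (Int.isUnit_iff_natAbs_eq.1 hgu)

theorem odd_of_sq_sub_mul_sq_eq_pow {a b c d : ℤ} {k : ℕ} (hd : d % 4 = 3) (hk : 2 ≤ k)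
    (hco : IsCoprime b c) (h : c ^ 2 - d * a ^ 2 = b ^ k) : Odd b := by
  by_contra hb
  rw [Int.not_odd_iff_even] at hb
  have hc : Odd c := Int.isCoprime_two_left.1 (hco.of_isCoprime_of_dvd_left hb.two_dvd)
  have hmod : b ^ k % 4 = 0 :=
    Int.emod_eq_zero_of_dvd ((pow_dvd_pow_of_dvd hb.two_dvd 2).trans (pow_dvd_pow b hk))
  have hc2 := Int.sq_mod_four_eq_one_of_odd hc
  have ha2 : a ^ 2 % 4 = 0 ∨ a ^ 2 % 4 = 1 := (Int.even_or_odd a).imp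
    (fun ha ↦ Int.emod_eq_zero_of_dvd (pow_dvd_pow_of_dvd ha.two_dvd 2))
    Int.sq_mod_four_eq_one_of_odd
  rw [← h, Int.sub_emod, Int.mul_emod, hd, hc2] at hmod
  rcases ha2 with ha2 | ha2 <;> norm_num [ha2] at hmod

end Integers

theorem stmt_2_general (a b c : ℤ) (hgcd : Int.gcd (Int.gcd a b) c = 1)
    (heq : -5 * a ^ 2 + b ^ 5 = c ^ 2) :
    Odd b ∧ ∃ m n : ℤ, IsCoprime m n ∧ ¬ (Odd m ∧ Odd n) ∧
      a = 5 * n * (m ^ 4 - 10 * m ^ 2 * n ^ 2 + 5 * n ^ 4) ∧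
      c = m * (m ^ 4 - 50 * m ^ 2 * n ^ 2 + 125 * n ^ 4) ∧
      (5 : ℤ) ∣ a := by
  have hnorm : c ^ 2 - -5 * a ^ 2 = b ^ 5 := by linarith
  have hco : IsCoprime b c := isCoprime_of_sq_sub_mul_sq_eq_pow
    (Int.prime_iff_natAbs_prime.2 (by norm_num)).squarefree (by norm_num) hgcd hnorm
  have hb : Odd b := odd_of_sq_sub_mul_sq_eq_pow (by norm_num) (by norm_num) hco hnorm
  obtain ⟨x, hx, hxb⟩ := exists_pow_eq_of_norm_eq_pow (n := 5) (z := ⟨c, a⟩) (by decide)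
    (by rw [Zsqrtd.norm_def, ← hnorm]; ring) hb hco
  have hc : c = x.re * (x.re ^ 4 - 50 * x.re ^ 2 * x.im ^ 2 + 125 * x.im ^ 4) := by
    linarith [congrArg Zsqrtd.re hx, re_pow_five x]
  have ha : a = 5 * x.im * (x.re ^ 4 - 10 * x.re ^ 2 * x.im ^ 2 + 5 * x.im ^ 4) := by
    linarith [congrArg Zsqrtd.im hx, im_pow_five x]
  refine ⟨hb, x.re, x.im, ?_, not_odd_re_and_odd_im_of_odd_norm (by decide) (hxb ▸ hb), ha, hc,
    ⟨_, by rw [ha, mul_assoc]⟩⟩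
  exact isCoprime_re_im_of_isCoprime_norm_re (hxb ▸ (hc ▸ hco).of_mul_right_left)

/-- **Remark 7.3.** Let `p` be an odd prime and `a, b, c` integers with `gcd(a, b, c) = 1`
satisfying `-5a² + b⁵ = c^(2p)`. Then `b` is odd, and there exist coprime integers `m, n`,
not both odd, such that `a = 5n(m⁴ - 10m²n² + 5n⁴)` and `c^p = m(m⁴ - 50m²n² + 125n⁴)`.
In particular, `5 ∣ a`. -/
theorem stmt_2 (p : ℕ) (hp : p.Prime) (hpodd : Odd p) (a b c : ℤ)
    (hgcd : Int.gcd (Int.gcd a b) c = 1)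
    (heq : -5 * a ^ 2 + b ^ 5 = c ^ (2 * p)) :
    Odd b ∧ ∃ m n : ℤ, IsCoprime m n ∧ ¬ (Odd m ∧ Odd n) ∧
      a = 5 * n * (m ^ 4 - 10 * m ^ 2 * n ^ 2 + 5 * n ^ 4) ∧
      c ^ p = m * (m ^ 4 - 50 * m ^ 2 * n ^ 2 + 125 * n ^ 4) ∧
      (5 : ℤ) ∣ a :=
  stmt_2_general a b (c ^ p) (Int.gcd_pow_right_of_gcd_eq_one hgcd) (by rw [heq, pow_mul'])
end

section
/- Let r ≥ 5 be a prime and q an odd prime, and let z, s be nonzero integers satisfying (I): v_q(z) = 1 and (II): v_q(s) ≥ (r+1)/2. Then the polynomial F(x) = (−z)^((r−1)/2)·x·h(2 − x²/z) + s is irreducible over the field ℚ_q of q-adic numbers if and only if q = r and v_r(s) = (r+1)/2. -/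
open Polynomial

/-- `h` is the minimal polynomial (over `ℤ`) of `ζ_r + ζ_r⁻¹`, where `ζ_r = exp(2πi/r)`
is a primitive `r`-th root of unity. -/
noncomputable def hpoly (r : ℕ) : Polynomial ℤ :=
  minpoly ℤ (Complex.exp (2 * Real.pi * Complex.I / (r : ℂ)) +
    (Complex.exp (2 * Real.pi * Complex.I / (r : ℂ)))⁻¹)

/-- The polynomial `F(x) = (-z)^((r-1)/2) · x · h(2 - x²/z) + s`, over a field `K`. -/
noncomputable def Fpoly (r : ℕ) (z s : ℤ) (K : Type*) [Field K] : Polynomial K :=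
  C ((((-z) ^ ((r - 1) / 2) : ℤ) : K)) * X *
    (((hpoly r).map (Int.castRingHom K)).comp (C 2 - C ((z : K))⁻¹ * X ^ 2)) + C ((s : K))

/-!
Write `r = 2n + 1`. The polynomial `h` is the `W_n` with `(u - 1) uⁿ W_n(u + 1/u) = u^r - 1`, and
`(-z)ⁿ X W_n(2 - X²/z)` is the Dickson polynomial `D_r(X, z)`, so that `F = D_r(X, z) + s`. Let `Tᵢ`
be the coefficients of `W_n(X + 2)`; then `F` has the coefficient `±z^(n-i) Tᵢ` at `X^(2i+1)`.
Here `T₀ = r`, and `D_r(X, 1) ≡ X^r` modulo `r` shows that `r ∣ Tᵢ` for `i < n`. In particular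
`W_n(X + 2)` is Eisenstein at `r`, which is why `W_n` is the minimal polynomial `h`.

Over a complete field, the roots of an irreducible polynomial all have the same absolute value, so
its Newton polygon is a segment. The linear coefficient of `F`, of valuation `n + v_q(r)`, lies
below the segment from `(0, v_q(s))` to `(r, 0)` unless `q = r` and `v_q(s) = n + 1`. In that
case all coefficients lie on or above a segment without interior lattice points, and this forces
irreducibility.
-/

section SingleSlope

variable {K : Type*}

/-- The Newton polygon of `f` is a single segment: the points `(i, v(aᵢ))` lie on or above the line
through `(0, v(a₀))` and `(n, 0)`, where `n = natDegree f`. For the multiplicative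
valuation `‖·‖` and with denominators cleared, this reads `‖aᵢ‖ ^ n ≤ ‖a₀‖ ^ (n - i)`. -/
def HasSingleSlope [NormedField K] (f : K[X]) : Prop :=
  ∀ i, ‖f.coeff i‖ ^ f.natDegree ≤ ‖f.coeff 0‖ ^ (f.natDegree - i)

theorem hasSingleSlope_iff_of_monic [NormedField K] {f : K[X]} (hf : f.Monic) :
    HasSingleSlope f ↔
      ∀ i < f.natDegree, ‖f.coeff i‖ ^ f.natDegree ≤ ‖f.coeff 0‖ ^ (f.natDegree - i) := by
  refine ⟨fun h i _ ↦ h i, fun h i ↦ (lt_or_ge i f.natDegree).elim (h i) fun hi ↦ ?_⟩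
  have hcoeff : ‖f.coeff i‖ ≤ 1 := by
    obtain rfl | hi := hi.eq_or_lt
    · simp [hf.coeff_natDegree]
    · simp [coeff_eq_zero_of_natDegree_lt hi]
  simpa [Nat.sub_eq_zero_of_le hi] using pow_le_one₀ (norm_nonneg _) hcoeff

-- All roots of `f` are conjugate, so they have the same absolute value `‖a₀‖ ^ (1 / n)`.
theorem hasSingleSlope_of_irreducible [NontriviallyNormedField K] [CompleteSpace K]
    [IsUltrametricDist K] {f : K[X]} (hf : f.Monic) (hirr : Irreducible f) :
    HasSingleSlope f := by
  refine (hasSingleSlope_iff_of_monic hf).2 fun i hi ↦ ?_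
  obtain ⟨x, hx⟩ := IsAlgClosed.exists_aeval_eq_zero (AlgebraicClosure K) f
    (degree_pos_of_irreducible hirr).ne'
  have hroot : spectralValue f = ‖f.coeff 0‖ ^ (1 / (f.natDegree : ℝ)) := by
    have hnorm := spectralNorm.spectralNorm_eq_norm_coeff_zero_rpow K (AlgebraicClosure K) x
    rwa [spectralNorm, ← minpoly.eq_of_irreducible_of_monic hirr hx hf] at hnorm
  have hterm : ‖f.coeff i‖ ^ (1 / (f.natDegree - i : ℝ)) ≤
      ‖f.coeff 0‖ ^ (1 / (f.natDegree : ℝ)) := by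
    rw [← hroot, ← spectralValueTerms_of_lt_natDegree f hi]
    exact le_ciSup (spectralValueTerms_bddAbove f) i
  have hn : (f.natDegree : ℝ) ≠ 0 := by exact_mod_cast (i.zero_le.trans_lt hi).ne'
  have hni : (f.natDegree - i : ℝ) ≠ 0 := sub_ne_zero.2 (by exact_mod_cast hi.ne')
  have hpow := Real.rpow_le_rpow (by positivity) hterm
    (by positivity : (0 : ℝ) ≤ (f.natDegree * (f.natDegree - i : ℕ) : ℕ))
  rw [← Real.rpow_mul (norm_nonneg _), ← Real.rpow_mul (norm_nonneg _), Nat.cast_mul,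
    Nat.cast_sub hi.le] at hpow
  rw [← Real.rpow_natCast, ← Real.rpow_natCast, Nat.cast_sub hi.le]
  convert hpow using 2 <;> field_simp

variable [NormedField K] [IsUltrametricDist K]

theorem norm_coeff_zero_eq_pow_of_mul {g h : K[X]} (hg : g.Monic) (hh : h.Monic) {ρ : ℝ}
    (hρ : 0 < ρ) (hle : ∀ i, ‖(g * h).coeff i‖ * ρ ^ i ≤ ρ ^ (g * h).natDegree)
    (h₀ : ‖(g * h).coeff 0‖ = ρ ^ (g * h).natDegree) :
    ‖g.coeff 0‖ = ρ ^ g.natDegree := by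
  set v := NormedField.toAbsoluteValue K
  have pow_le_gaussNorm {p : K[X]} (hp : p.Monic) : ρ ^ p.natDegree ≤ p.gaussNorm v ρ := by
    simpa [hp.coeff_natDegree] using le_gaussNorm v p hρ.le p.natDegree
  have norm_le_gaussNorm (p : K[X]) : ‖p.coeff 0‖ ≤ p.gaussNorm v ρ := by
    simpa using! le_gaussNorm v p hρ.le 0
  have gaussNorm_mul_le :
      g.gaussNorm v ρ * h.gaussNorm v ρ ≤ ρ ^ g.natDegree * ρ ^ h.natDegree := by
    rw [← pow_add, ← hg.natDegree_mul hh,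
      ← gaussNorm_mul IsUltrametricDist.isNonarchimedean_norm hρ]
    obtain ⟨i, hi⟩ := exists_eq_gaussNorm v ρ (g * h)
    exact hi.trans_le (hle i)
  have h₀_mul : ‖g.coeff 0‖ * ‖h.coeff 0‖ = ρ ^ g.natDegree * ρ ^ h.natDegree := by
    rw [← norm_mul, ← mul_coeff_zero, h₀, hg.natDegree_mul hh, pow_add]
  obtain ⟨gaussNorm_g, gaussNorm_h⟩ := (mul_eq_mul_iff_eq_and_eq_of_pos (pow_le_gaussNorm hg)
    (pow_le_gaussNorm hh) (by positivity) ((pow_pos hρ _).trans_le (pow_le_gaussNorm hh))).1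
      ((mul_le_mul (pow_le_gaussNorm hg) (pow_le_gaussNorm hh) (by positivity)
        (gaussNorm_nonneg _ _ hρ.le)).antisymm gaussNorm_mul_le)
  have hg₀ : 0 < ‖g.coeff 0‖ := norm_pos_iff.2 fun h0 ↦ by
    rw [h0, norm_zero, zero_mul] at h₀_mul
    exact absurd h₀_mul (by positivity)
  exact ((mul_eq_mul_iff_eq_and_eq_of_pos ((norm_le_gaussNorm g).trans_eq gaussNorm_g.symm)
    ((norm_le_gaussNorm h).trans_eq gaussNorm_h.symm) hg₀ (by positivity)).1 h₀_mul).1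

theorem HasSingleSlope.irreducible {f : K[X]} (hslope : HasSingleSlope f) (hf : f.Monic)
    (hf₁ : f ≠ 1)
    (hlattice : ∀ k ∈ Finset.Ioo 0 f.natDegree, ∀ x : K, ‖x‖ ^ f.natDegree ≠ ‖f.coeff 0‖ ^ k) :
    Irreducible f := by
  refine (Monic.irreducible_iff_lt_natDegree_lt hf hf₁).2 ?_
  rintro g hg hdeg ⟨h, rfl⟩
  obtain ⟨hg_pos, hg_le⟩ := Finset.mem_Ioc.1 hdeg
  have hh : h.Monic := hg.of_mul_monic_left hf
  set n := (g * h).natDegree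
  have hg_lt : g.natDegree < n := by lia
  have hn₀ : n ≠ 0 := by lia
  have hpos : 0 < ‖(g * h).coeff 0‖ := (norm_nonneg _).lt_of_ne fun h0 ↦
    hlattice _ (Finset.mem_Ioo.2 ⟨hg_pos, hg_lt⟩) 0
      (by rw [← h0, norm_zero, zero_pow hn₀, zero_pow hg_pos.ne'])
  obtain ⟨ρ, hρ, hρn⟩ : ∃ ρ : ℝ, 0 < ρ ∧ ρ ^ n = ‖(g * h).coeff 0‖ :=
    ⟨‖(g * h).coeff 0‖ ^ (n : ℝ)⁻¹, by positivity, Real.rpow_inv_natCast_pow hpos.le hn₀⟩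
  have hcoeff (i : ℕ) : ‖(g * h).coeff i‖ * ρ ^ i ≤ ρ ^ n := by
    obtain hi | hi := le_or_gt i n
    · have hle : ‖(g * h).coeff i‖ ≤ ρ ^ (n - i) := by
        rw [← pow_le_pow_iff_left₀ (norm_nonneg _) (by positivity) hn₀, pow_right_comm, hρn]
        exact hslope i
      calc ‖(g * h).coeff i‖ * ρ ^ i ≤ ρ ^ (n - i) * ρ ^ i := by gcongr
        _ = ρ ^ n := pow_sub_mul_pow ρ hi
    · rw [coeff_eq_zero_of_natDegree_lt hi, norm_zero, zero_mul]
      positivity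
  refine hlattice _ (Finset.mem_Ioo.2 ⟨hg_pos, hg_lt⟩) (g.coeff 0) ?_
  rw [norm_coeff_zero_eq_pow_of_mul hg hh hρ hcoeff hρn.symm, ← hρn, pow_right_comm]

end SingleSlope

section Padic

variable {p : ℕ} [Fact p.Prime]

theorem padic_norm_pow_le_norm_pow_iff {x y : ℚ_[p]} (hx : x ≠ 0) (hy : y ≠ 0) (m n : ℕ) :
    ‖x‖ ^ m ≤ ‖y‖ ^ n ↔ (n : ℤ) * y.valuation ≤ m * x.valuation := by
  have hp : (1 : ℝ) < p := by exact_mod_cast (Fact.out : p.Prime).one_lt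
  rw [Padic.norm_eq_zpow_neg_valuation hx, Padic.norm_eq_zpow_neg_valuation hy, ← zpow_natCast,
    ← zpow_natCast, ← zpow_mul, ← zpow_mul, zpow_le_zpow_iff_right₀ hp]
  grind

theorem hasSingleSlope_iff_valuation {f : ℚ_[p][X]} (hf : f.Monic) (h₀ : f.coeff 0 ≠ 0) :
    HasSingleSlope f ↔ ∀ i < f.natDegree, f.coeff i ≠ 0 →
      ((f.natDegree : ℤ) - i) * (f.coeff 0).valuation ≤ f.natDegree * (f.coeff i).valuation := by
  rw [hasSingleSlope_iff_of_monic hf]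
  refine forall₂_congr fun i hi ↦ ?_
  obtain hcoeff | hcoeff := eq_or_ne (f.coeff i) 0
  · simp [hcoeff, (i.zero_le.trans_lt hi).ne']
  · rw [padic_norm_pow_le_norm_pow_iff hcoeff h₀, Nat.cast_sub hi.le]
    exact (imp_iff_right hcoeff).symm

-- A factor of degree `k` would contribute a vertex `(k, v)` to the Newton polygon of `f`, but the
-- segment from `(0, v(a₀))` to `(n, 0)` contains no interior lattice point.
theorem HasSingleSlope.irreducible_of_isCoprime {f : ℚ_[p][X]} (hslope : HasSingleSlope f)
    (hf : f.Monic) (h₀ : f.coeff 0 ≠ 0)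
    (hcop : IsCoprime (f.natDegree : ℤ) (f.coeff 0).valuation) : Irreducible f := by
  refine hslope.irreducible hf ?_ fun k hk x hx ↦ ?_
  · rintro rfl
    simp [isCoprime_zero_left] at hcop
  obtain ⟨hk_pos, hk_lt⟩ := Finset.mem_Ioo.1 hk
  have hx₀ : x ≠ 0 := by
    rintro rfl
    rw [norm_zero, zero_pow (hk_pos.trans hk_lt).ne'] at hx
    exact h₀ (norm_eq_zero.1 (eq_zero_of_pow_eq_zero hx.symm))
  have hval : (k : ℤ) * (f.coeff 0).valuation = f.natDegree * x.valuation :=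
    ((padic_norm_pow_le_norm_pow_iff hx₀ h₀ _ _).1 hx.le).antisymm
      ((padic_norm_pow_le_norm_pow_iff h₀ hx₀ _ _).1 hx.ge)
  have hdvd : f.natDegree ∣ k :=
    Int.natCast_dvd_natCast.1 (hcop.dvd_of_dvd_mul_right ⟨_, hval⟩)
  exact (Nat.le_of_dvd hk_pos hdvd).not_gt hk_lt

end Padic

section Dickson

/-- The Chebyshev polynomials of the fourth kind, rescaled as `W_n(X / 2)` so that they are monic
with integer coefficients: `chebyshevW R n` takes the value
`sin ((n + 1 / 2) θ) / sin (θ / 2)` at `2 cos θ`. -/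
noncomputable def chebyshevW (R : Type*) [CommRing R] (n : ℕ) : R[X] :=
  Chebyshev.S R n + Chebyshev.S R (n - 1)

variable {R : Type*} [CommRing R]

theorem isMonicOfDegree_of_recurrence [Nontrivial R] {p : ℕ → R[X]} {a : R}
    (h₀ : (p 0).natDegree = 0) (h₁ : IsMonicOfDegree (p 1) 1)
    (hrec : ∀ n, p (n + 2) = X * p (n + 1) - C a * p n) (n : ℕ) :
    IsMonicOfDegree (p (n + 1)) (n + 1) := by
  suffices (p n).natDegree ≤ n ∧ IsMonicOfDegree (p (n + 1)) (n + 1) from this.2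
  induction n with
  | zero => exact ⟨h₀.le, h₁⟩
  | succ n ih =>
    obtain ⟨hn, hn₁⟩ := ih
    refine ⟨hn₁.natDegree_eq.le, ?_⟩
    have hX : IsMonicOfDegree (X * p (n + 1)) (n + 2) := by
      simpa [add_comm 1] using (isMonicOfDegree_X R).mul hn₁
    rw [hrec]
    exact hX.sub ((natDegree_C_mul_le a (p n)).trans_lt (by lia))

theorem chebyshevW_zero : chebyshevW R 0 = 1 := by simp [chebyshevW]

theorem chebyshevW_one : chebyshevW R 1 = X + 1 := by simp [chebyshevW]

theorem chebyshevW_add_two (n : ℕ) :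
    chebyshevW R (n + 2) = X * chebyshevW R (n + 1) - chebyshevW R n := by
  have h₁ := Chebyshev.S_add_two R n
  have h₂ := Chebyshev.S_add_one R n
  simp only [chebyshevW]
  push_cast
  rw [h₁, add_sub_cancel_right, show (n : ℤ) + 2 - 1 = n + 1 by ring, h₂]
  ring

theorem isMonicOfDegree_chebyshevW [Nontrivial R] (n : ℕ) :
    IsMonicOfDegree (chebyshevW R n) n := by
  obtain _ | n := n
  · rw [chebyshevW_zero, isMonicOfDegree_zero_iff]
  · refine isMonicOfDegree_of_recurrence (a := 1) (by simp [chebyshevW_zero]) ?_ (fun n ↦ ?_) n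
    · simpa [chebyshevW_one] using isMonicOfDegree_X_add_one (1 : R)
    · rw [C_1, one_mul, chebyshevW_add_two]

theorem isMonicOfDegree_taylor_chebyshevW [Nontrivial R] (a : R) (n : ℕ) :
    IsMonicOfDegree (taylor a (chebyshevW R n)) n := by
  simpa [taylor_apply] using (isMonicOfDegree_chebyshevW n).comp one_ne_zero
    (isMonicOfDegree_X_add_one a)

theorem map_chebyshevW {S : Type*} [CommRing S] (f : R →+* S) (n : ℕ) :
    (chebyshevW R n).map f = chebyshevW S n := by
  simp [chebyshevW, Chebyshev.map_S]

theorem chebyshevW_eval_two (n : ℕ) : (chebyshevW R n).eval 2 = 2 * n + 1 := by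
  simp only [chebyshevW, eval_add, Chebyshev.S_eval_two, Int.cast_sub, Int.cast_natCast,
    Int.cast_one]
  ring

theorem sub_one_mul_pow_mul_chebyshevW_eval {u v : R} (huv : u * v = 1) (n : ℕ) :
    (u - 1) * u ^ n * (chebyshevW R n).eval (u + v) = u ^ (2 * n + 1) - 1 := by
  induction n using Nat.twoStepInduction with
  | zero => simp [chebyshevW_zero]
  | one =>
    simp only [chebyshevW_one, eval_add, eval_X, eval_one]
    linear_combination (u - 1) * huv
  | more n ih₀ ih₁ =>
    simp only [chebyshevW_add_two, eval_sub, eval_mul, eval_X]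
    linear_combination (u * (u + v)) * ih₁ - u ^ 2 * ih₀ + (u ^ (2 * n + 3) - 1) * huv

theorem isMonicOfDegree_dickson_one [Nontrivial R] (a : R) (n : ℕ) :
    IsMonicOfDegree (dickson 1 a (n + 1)) (n + 1) := by
  refine isMonicOfDegree_of_recurrence (a := a) ?_ ?_ (dickson_add_two 1 a) n
  · norm_num [dickson_zero]
  · simpa using isMonicOfDegree_X R

theorem isMonicOfDegree_dickson_add_C [Nontrivial R] (a s : R) (n : ℕ) :
    IsMonicOfDegree (dickson 1 a (n + 1) + C s) (n + 1) :=
  (isMonicOfDegree_dickson_one a n).add_right (by simp)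

theorem dickson_add_four (k n : ℕ) (a : R) :
    dickson k a (n + 4) =
      (X ^ 2 - 2 * C a) * dickson k a (n + 2) - C a ^ 2 * dickson k a n := by
  rw [dickson_add_two, dickson_add_two, dickson_add_two]
  ring

variable {K : Type*} [Field K] {z : K}

theorem dickson_one_two_mul_add_one_eq_comp (hz : z ≠ 0) (n : ℕ) :
    dickson 1 z (2 * n + 1) =
      C ((-z) ^ n) * X * (chebyshevW K n).comp (C 2 - C z⁻¹ * X ^ 2) := by
  have hCz : (C z : K[X]) * C z⁻¹ = 1 := by rw [← C_mul, mul_inv_cancel₀ hz, C_1]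
  induction n using Nat.twoStepInduction with
  | zero => simp [chebyshevW_zero]
  | one =>
    simp only [mul_one, Nat.reduceAdd, dickson_add_two, zero_add, dickson_one, dickson_zero,
      Nat.cast_one, pow_one, C_neg, chebyshevW_one, add_comp, X_comp, one_comp, map_ofNat C 2]
    linear_combination -X ^ 3 * hCz
  | more n ih₀ ih₁ =>
    rw [show 2 * (n + 2) + 1 = 2 * n + 1 + 4 by ring, dickson_add_four,
      show 2 * n + 1 + 2 = 2 * (n + 1) + 1 by ring, ih₀, ih₁, chebyshevW_add_two]
    simp only [sub_comp, mul_comp, X_comp, map_pow, map_neg, map_ofNat]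
    linear_combination (-1) ^ n * C z ^ (n + 1) * X ^ 3 *
      (chebyshevW K (n + 1)).comp (2 - C z⁻¹ * X ^ 2) * hCz

theorem dickson_one_two_mul_add_one_eq_expand (hz : z ≠ 0) (n : ℕ) :
    dickson 1 z (2 * n + 1) =
      C ((-z) ^ n) * (expand K 2 ((taylor 2 (chebyshevW K n)).comp (C (-z⁻¹) * X)) * X) := by
  rw [dickson_one_two_mul_add_one_eq_comp hz, expand_eq_comp_X_pow, taylor_apply, mul_assoc,
    mul_comm X, comp_assoc, comp_assoc]
  simp [sub_eq_neg_add]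

theorem coeff_dickson_two_mul_add_one (hz : z ≠ 0) (n i : ℕ) :
    (dickson 1 z (2 * n + 1)).coeff (2 * i + 1) =
      (-z) ^ n * (-z)⁻¹ ^ i * (taylor 2 (chebyshevW ℤ n)).coeff i := by
  rw [dickson_one_two_mul_add_one_eq_expand hz, coeff_C_mul, coeff_mul_X,
    coeff_expand_mul' two_pos, comp_C_mul_X_coeff, ← map_chebyshevW (Int.castRingHom K),
    ← map_ofNat (Int.castRingHom K), ← map_taylor, coeff_map, eq_intCast, inv_neg]
  ring

theorem coeff_one_dickson_two_mul_add_one (hz : z ≠ 0) (n : ℕ) :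
    (dickson 1 z (2 * n + 1)).coeff 1 = (-z) ^ n * (2 * n + 1 : ℕ) := by
  simpa [taylor_coeff_zero, chebyshevW_eval_two] using coeff_dickson_two_mul_add_one hz n 0

theorem coeff_dickson_two_mul (hz : z ≠ 0) (n i : ℕ) :
    (dickson 1 z (2 * n + 1)).coeff (2 * i) = 0 := by
  rw [dickson_one_two_mul_add_one_eq_expand hz, coeff_C_mul]
  obtain _ | i := i
  · simp
  · rw [show 2 * (i + 1) = 2 * i + 1 + 1 by ring, coeff_mul_X, coeff_expand two_pos,
      if_neg (by lia), mul_zero]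

theorem coeff_zero_dickson_add_C (hz : z ≠ 0) (s : K) (n : ℕ) :
    (dickson 1 z (2 * n + 1) + C s).coeff 0 = s := by
  rw [coeff_add, coeff_C_zero, show (dickson 1 z (2 * n + 1)).coeff 0 = 0 from
    coeff_dickson_two_mul hz n 0, zero_add]

theorem dvd_coeff_taylor_chebyshevW {n i : ℕ} (hn : (2 * n + 1).Prime) (hi : i < n) :
    ((2 * n + 1 : ℕ) : ℤ) ∣ (taylor 2 (chebyshevW ℤ n)).coeff i := by
  have : Fact (2 * n + 1).Prime := ⟨hn⟩
  have hcoeff := coeff_dickson_two_mul_add_one (one_ne_zero (α := ZMod (2 * n + 1))) n i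
  rw [dickson_one_one_zmod_p, coeff_X_pow, if_neg (by lia)] at hcoeff
  rw [← ZMod.intCast_zmod_eq_zero_iff_dvd]
  simpa [← mul_pow] using hcoeff.symm

theorem isEisensteinAt_taylor_chebyshevW {n : ℕ} (hn : (2 * n + 1).Prime) :
    (taylor 2 (chebyshevW ℤ n)).IsEisensteinAt (Ideal.span {((2 * n + 1 : ℕ) : ℤ)}) := by
  have hprime : Prime ((2 * n + 1 : ℕ) : ℤ) := Nat.prime_iff_prime_int.1 hn
  have hdeg := isMonicOfDegree_taylor_chebyshevW (2 : ℤ) n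
  refine hdeg.monic.isEisensteinAt_of_mem_of_notMem
    (Ideal.span_singleton_eq_top.not.2 hprime.not_isUnit) (fun hi ↦ ?_) fun hsq ↦ ?_
  · rw [hdeg.natDegree_eq] at hi
    exact Ideal.mem_span_singleton.2 (dvd_coeff_taylor_chebyshevW hn hi)
  · rw [Ideal.span_singleton_pow, Ideal.mem_span_singleton, taylor_coeff_zero,
      chebyshevW_eval_two] at hsq
    have hdvd : ((2 * n + 1 : ℕ) : ℤ) ^ 2 ∣ ((2 * n + 1 : ℕ) : ℤ) ^ 1 := by simpa using hsq
    exact absurd ((pow_dvd_pow_iff hprime.ne_zero hprime.not_isUnit).1 hdvd) (by norm_num)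

theorem irreducible_chebyshevW {n : ℕ} (hn : (2 * n + 1).Prime) :
    Irreducible (chebyshevW ℤ n) := by
  have hprime : Prime ((2 * n + 1 : ℕ) : ℤ) := Nat.prime_iff_prime_int.1 hn
  have hdeg := isMonicOfDegree_taylor_chebyshevW (2 : ℤ) n
  have hn₀ : n ≠ 0 := by
    rintro rfl
    exact Nat.not_prime_one hn
  rw [← MulEquiv.irreducible_iff (taylorEquiv (2 : ℤ))]
  exact (isEisensteinAt_taylor_chebyshevW hn).irreducible
    ((Ideal.span_singleton_prime hprime.ne_zero).2 hprime) hdeg.monic.isPrimitive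
    (hn₀.bot_lt.trans_eq hdeg.natDegree_eq.symm)

theorem hpoly_eq_chebyshevW {n : ℕ} (hn : (2 * n + 1).Prime) :
    hpoly (2 * n + 1) = chebyshevW ℤ n := by
  set ζ : ℂ := Complex.exp (2 * Real.pi * Complex.I / (2 * n + 1 : ℕ))
  have hζ : IsPrimitiveRoot ζ (2 * n + 1) := Complex.isPrimitiveRoot_exp _ hn.ne_zero
  have hζ_inv : ζ * ζ⁻¹ = 1 := mul_inv_cancel₀ (hζ.ne_zero hn.ne_zero)
  have hroot : aeval (ζ + ζ⁻¹) (chebyshevW ℤ n) = 0 := by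
    have hmul := sub_one_mul_pow_mul_chebyshevW_eval hζ_inv n
    rw [hζ.pow_eq_one, sub_self] at hmul
    rw [aeval_def, eval₂_eq_eval_map, map_chebyshevW]
    refine (mul_eq_zero.1 hmul).resolve_left (mul_ne_zero ?_ ?_)
    · exact sub_ne_zero.2 (hζ.ne_one hn.one_lt)
    · exact pow_ne_zero _ (hζ.ne_zero hn.ne_zero)
  have hmonic := (isMonicOfDegree_chebyshevW (R := ℤ) n).monic
  have hint : IsIntegral ℤ (ζ + ζ⁻¹) := ⟨_, hmonic, hroot⟩
  exact eq_of_monic_of_associated (minpoly.monic hint) hmonic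
    ((minpoly.irreducible hint).associated_of_dvd (irreducible_chebyshevW hn)
      (minpoly.isIntegrallyClosed_dvd hint hroot))

theorem Fpoly_eq_dickson_add_C {r : ℕ} (hr : r.Prime) (hr₂ : r ≠ 2) {z : ℤ} (hz : (z : K) ≠ 0)
    (s : ℤ) : Fpoly r z s K = dickson 1 (z : K) r + C (s : K) := by
  obtain ⟨n, rfl⟩ := hr.odd_of_ne_two hr₂
  rw [Fpoly, hpoly_eq_chebyshevW hr, map_chebyshevW, dickson_one_two_mul_add_one_eq_comp hz]
  simp

end Dickson

section Valuation

variable {q n : ℕ} [Fact q.Prime] {z s : ℚ_[q]}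

theorem padic_valuation_neg (x : ℚ_[q]) : (-x).valuation = x.valuation := by
  obtain rfl | hx := eq_or_ne x 0
  · rw [neg_zero]
  · rw [neg_eq_neg_one_mul, Padic.valuation_mul (by simp) hx, add_eq_right]
    simpa [padicValInt] using Padic.valuation_intCast (p := q) (-1)

theorem valuation_coeff_dickson (hz : z ≠ 0) {i : ℕ}
    (hi : (dickson 1 z (2 * n + 1)).coeff (2 * i + 1) ≠ 0) :
    ((dickson 1 z (2 * n + 1)).coeff (2 * i + 1)).valuation =
      (n - i) * z.valuation + padicValInt q ((taylor 2 (chebyshevW ℤ n)).coeff i) := by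
  rw [coeff_dickson_two_mul_add_one hz] at hi ⊢
  obtain ⟨hpow, hcoeff⟩ := mul_ne_zero_iff.1 hi
  obtain ⟨hpow, hinv⟩ := mul_ne_zero_iff.1 hpow
  rw [Padic.valuation_mul (mul_ne_zero hpow hinv) hcoeff, Padic.valuation_mul hpow hinv,
    Padic.valuation_intCast, Padic.valuation_pow, Padic.valuation_pow, Padic.valuation_inv,
    padic_valuation_neg]
  ring

theorem valuation_coeff_one_dickson (hz : z ≠ 0) :
    ((dickson 1 z (2 * n + 1)).coeff 1).valuation =
      n * z.valuation + padicValNat q (2 * n + 1) := by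
  rw [coeff_one_dickson_two_mul_add_one hz, Padic.valuation_mul (pow_ne_zero n (neg_ne_zero.2 hz))
    (Nat.cast_ne_zero.2 (2 * n).succ_ne_zero), Padic.valuation_pow, padic_valuation_neg,
    Padic.valuation_natCast]

theorem valuation_le_of_irreducible_dickson_add_C (hz : z ≠ 0) (hs : s ≠ 0)
    (hirr : Irreducible (dickson 1 z (2 * n + 1) + C s)) :
    2 * n * s.valuation ≤ (2 * n + 1) * (n * z.valuation + padicValNat q (2 * n + 1)) := by
  obtain rfl | hn := n.eq_zero_or_pos
  · simp
  have hF := isMonicOfDegree_dickson_add_C z s (2 * n)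
  have hF₀ := coeff_zero_dickson_add_C hz s n
  have hF₁ : (dickson 1 z (2 * n + 1) + C s).coeff 1 = (dickson 1 z (2 * n + 1)).coeff 1 := by
    rw [coeff_add, coeff_C_succ, add_zero]
  have hF₁_ne : (dickson 1 z (2 * n + 1) + C s).coeff 1 ≠ 0 := by
    rw [hF₁, coeff_one_dickson_two_mul_add_one hz]
    exact mul_ne_zero (pow_ne_zero n (neg_ne_zero.2 hz)) (Nat.cast_ne_zero.2 (2 * n).succ_ne_zero)
  have hslope := (hasSingleSlope_iff_valuation hF.monic (by rwa [hF₀])).1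
    (hasSingleSlope_of_irreducible hF.monic hirr) 1 (by rw [hF.natDegree_eq]; lia) hF₁_ne
  rw [hF₀, hF₁, valuation_coeff_one_dickson hz, hF.natDegree_eq] at hslope
  simpa using hslope

theorem hasSingleSlope_dickson_add_C (hq : q = 2 * n + 1) (hz : z.valuation = 1) (hs₀ : s ≠ 0)
    (hs : s.valuation ≤ n + 1) : HasSingleSlope (dickson 1 z (2 * n + 1) + C s) := by
  have hz₀ : z ≠ 0 := by rintro rfl; simp at hz
  have hF := isMonicOfDegree_dickson_add_C z s (2 * n)
  have hF₀ := coeff_zero_dickson_add_C hz₀ s n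
  refine (hasSingleSlope_iff_valuation hF.monic (by rwa [hF₀])).2 fun j hj hcoeff ↦ ?_
  rw [hF.natDegree_eq] at hj ⊢
  obtain _ | j := j
  · simp
  rw [hF₀]
  rw [coeff_add, coeff_C_succ, add_zero] at hcoeff ⊢
  obtain ⟨i, rfl | rfl⟩ := j.even_or_odd'
  · have hcoeff_ne : (taylor 2 (chebyshevW ℤ n)).coeff i ≠ 0 := by
      intro h
      exact hcoeff (by rw [coeff_dickson_two_mul_add_one hz₀, h, Int.cast_zero, mul_zero])
    have hi : i < n := by lia
    have hdvd : (q : ℤ) ^ 1 ∣ (taylor 2 (chebyshevW ℤ n)).coeff i := by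
      rw [pow_one, hq]
      exact dvd_coeff_taylor_chebyshevW (hq ▸ Fact.out) hi
    have hval : (1 : ℤ) ≤ padicValInt q ((taylor 2 (chebyshevW ℤ n)).coeff i) := by
      exact_mod_cast ((padicValInt_dvd_iff 1 _).1 hdvd).resolve_left hcoeff_ne
    rw [valuation_coeff_dickson hz₀ hcoeff, hz]
    zify at hi
    push_cast
    nlinarith
  · exact absurd (coeff_dickson_two_mul hz₀ n (i + 1)) hcoeff

theorem irreducible_dickson_add_C (hq : q = 2 * n + 1) (hz : z.valuation = 1)
    (hs : s.valuation = n + 1) : Irreducible (dickson 1 z (2 * n + 1) + C s) := by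
  have hz₀ : z ≠ 0 := by rintro rfl; simp at hz
  have hs₀ : s ≠ 0 := by rintro rfl; rw [Padic.valuation_zero] at hs; lia
  have hF := isMonicOfDegree_dickson_add_C z s (2 * n)
  have hF₀ := coeff_zero_dickson_add_C hz₀ s n
  refine (hasSingleSlope_dickson_add_C hq hz hs₀ hs.le).irreducible_of_isCoprime hF.monic
    (by rwa [hF₀]) ?_
  rw [hF₀, hs, hF.natDegree_eq]
  exact ⟨-1, 2, by push_cast; ring⟩

end Valuation

theorem stmt_3_general {r q : ℕ} [Fact r.Prime] [Fact q.Prime] (hr : 5 ≤ r) {z s : ℚ_[q]}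
    (hz : z.valuation = 1) (hs : (r : ℤ) + 1 ≤ 2 * s.valuation) :
    Irreducible (dickson 1 z r + C s) ↔ (q = r ∧ 2 * s.valuation = (r : ℤ) + 1) := by
  obtain ⟨n, rfl⟩ := (Fact.out : r.Prime).odd_of_ne_two (by lia)
  have hz₀ : z ≠ 0 := by rintro rfl; simp at hz
  have hs₀ : s ≠ 0 := by rintro rfl; rw [Padic.valuation_zero] at hs; lia
  have hn : (2 : ℤ) ≤ n := by lia
  push_cast at hs ⊢
  refine ⟨fun hirr ↦ ?_, fun ⟨hq, hval⟩ ↦ irreducible_dickson_add_C hq hz (by linarith [hval])⟩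
  have hle := valuation_le_of_irreducible_dickson_add_C hz₀ hs₀ hirr
  rw [hz] at hle
  obtain rfl | hne := eq_or_ne q (2 * n + 1)
  · refine ⟨rfl, ?_⟩
    rw [padicValNat_self, Nat.cast_one] at hle
    have : s.valuation < n + 2 := by
      by_contra! h
      nlinarith [hn]
    lia
  · rw [padicValNat_primes hne, Nat.cast_zero] at hle
    nlinarith

/-- **Lemma 5.12.** Let `r ≥ 5` be a prime and `q` an odd prime, and let `z, s` be nonzero
integers with `v_q(z) = 1` and `v_q(s) ≥ (r+1)/2`. Then `F(x)` is irreducible over `ℚ_q`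
if and only if `q = r` and `v_r(s) = (r+1)/2`. -/
theorem stmt_3 (r q : ℕ) [Fact r.Prime] [Fact q.Prime] (hr : 5 ≤ r) (hq : Odd q)
    (z s : ℤ) (hz0 : z ≠ 0) (hs0 : s ≠ 0)
    (hz : ((z : ℚ_[q])).valuation = 1)
    (hs : (r : ℤ) + 1 ≤ 2 * ((s : ℚ_[q])).valuation) :
    Irreducible (Fpoly r z s ℚ_[q]) ↔
      (q = r ∧ 2 * ((s : ℚ_[q])).valuation = (r : ℤ) + 1) := by
  rw [Fpoly_eq_dickson_add_C Fact.out (by lia) (Int.cast_ne_zero.2 hz0)]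
  exact stmt_3_general hr hz hs
end

section
/- Let r ≥ 5 be a prime and q an odd prime dividing both z and s, where z, s are nonzero integers satisfying (I): v_q(z) = 1 and (II): v_q(s) ≥ (r+1)/2. Set Δ = s² − 4z^r, fix a square root √Δ of Δ in an algebraic closure of ℚ_q, and fix elements α₀, β₀ of the algebraic closure with α₀^r = −(s + √Δ)/2 and β₀^r = −(s − √Δ)/2. Then, with v_q the unique extension of the q-adic valuation normalized by v_q(q) = 1, one has v_q(√Δ) = r/2, v_q(α₀) = v_q(β₀) = 1/2, and v_q(α₀ − ζ_r^j β₀) = 1/2 for every j with 0 ≤ j ≤ r − 1, where ζ_r is a primitive r-th root of unity in the algebraic closure. -/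
open Polynomial

/-- `v` is (the additive form of) the unique extension to the algebraic closure of `ℚ_q` of
the `q`-adic valuation, normalized so that `v q = 1`: it is additive on products of nonzero
elements, satisfies the ultrametric inequality, and restricts to the `q`-adic valuation
on `ℚ_q`. -/
def IsValuationExt (q : ℕ) [Fact q.Prime] (v : AlgebraicClosure ℚ_[q] → ℚ) : Prop :=
  (∀ x y : AlgebraicClosure ℚ_[q], x ≠ 0 → y ≠ 0 → v (x * y) = v x + v y) ∧
  (∀ x y : AlgebraicClosure ℚ_[q], x ≠ 0 → y ≠ 0 → x + y ≠ 0 →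
    min (v x) (v y) ≤ v (x + y)) ∧
  (∀ x : ℚ_[q], x ≠ 0 →
    v (algebraMap ℚ_[q] (AlgebraicClosure ℚ_[q]) x) = (x.valuation : ℚ))

/-!
Since `2 v(s) > r v(z)` and `v(2) = 0`, the term `4 z ^ r` dominates `Δ = s² - 4 z ^ r`, and then
`√Δ` dominates `s` in `s ± √Δ`; this gives `v(√Δ) = r v(z) / 2` and `v(α₀) = v(β₀) = v(z) / 2`.
For `η ^ r = 1` put `y = η β₀`. Then `α₀ ^ r - y ^ r = -√Δ` has valuation exactly `r v(α₀)`, while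
its cofactor `∑ α₀ ^ i y ^ (r - 1 - i)` over `α₀ - y` has valuation at least `(r - 1) v(α₀)`. So
`v(α₀ - y) ≤ v(α₀)`, and the ultrametric inequality is the reverse bound.
-/

section AddValuation

variable {R Γ₀ : Type*}

section Monoid

variable [LinearOrderedAddCommMonoidWithTop Γ₀]

lemma addValuation_eq_zero_of_pow_eq_one [Ring R] (w : AddValuation R Γ₀) {η : R} {n : ℕ}
    (hn : n ≠ 0) (hη : η ^ n = 1) : w η = 0 := by
  have h : n • w η = 0 := by rw [← w.map_pow, hη, w.map_one]
  exact le_antisymm ((nsmul_nonpos_iff hn).1 h.le) ((nsmul_nonneg_iff hn).1 h.ge)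

variable [CommRing R] (w : AddValuation R Γ₀)

lemma nsmul_le_addValuation_geom_sum₂ {x y : R} (hxy : w x = w y) (n : ℕ) :
    (n - 1) • w x ≤ w (∑ i ∈ Finset.range n, x ^ i * y ^ (n - 1 - i)) := by
  refine w.map_le_sum fun i hi ↦ le_of_eq ?_
  have hin : i + (n - 1 - i) = n - 1 := by have := Finset.mem_range.1 hi; omega
  rw [w.map_mul, w.map_pow, w.map_pow, ← hxy, ← add_nsmul, hin]

lemma two_nsmul_addValuation_of_sq_eq {s z d : R} {r : ℕ} (h2 : w 2 = 0)
    (hs : r • w z < 2 • w s) (hd : d ^ 2 = s ^ 2 - 4 * z ^ r) : 2 • w d = r • w z := by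
  have h4 : w (4 * z ^ r) = r • w z := by
    rw [show (4 : R) = 2 ^ 2 by norm_num, w.map_mul, w.map_pow, w.map_pow, h2, smul_zero, zero_add]
  rw [← w.map_pow, hd, w.map_sub_eq_of_lt_right (by rwa [h4, w.map_pow]), h4]

lemma nsmul_addValuation_of_two_mul_pow_eq {s d x : R} {r : ℕ} (h2 : w 2 = 0) (hds : w d < w s)
    (hx : 2 * x ^ r = -(s + d)) : r • w x = w d := by
  calc r • w x = w (2 * x ^ r) := by rw [w.map_mul, w.map_pow, h2, zero_add]
    _ = w d := by rw [hx, w.map_neg, w.map_add_eq_of_lt_right hds]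

end Monoid

section Group

variable [LinearOrderedAddCommGroupWithTop Γ₀]

instance isAddTorsionFree_of_linearOrderedAddCommGroupWithTop : IsAddTorsionFree Γ₀ where
  nsmul_right_injective _ hn := pow_left_injective (M := Multiplicative Γ₀ᵒᵈ) hn

variable [CommRing R] (w : AddValuation R Γ₀)

lemma addValuation_sub_eq_of_pow_sub_pow {x y : R} {n : ℕ} (hn : n ≠ 0) (hxy : w x = w y)
    (h : w (x ^ n - y ^ n) = n • w x) : w (x - y) = w x := by
  have hge : w x ≤ w (x - y) := w.map_le_sub le_rfl hxy.le
  rcases eq_or_ne (w x) ⊤ with hx | hx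
  · exact le_antisymm (hx ▸ le_top) hge
  have hnx : (n - 1) • w x ≠ ⊤ :=
    LinearOrderedAddCommGroupWithTop.isAddUnit_iff.1
      ((LinearOrderedAddCommGroupWithTop.isAddUnit_iff.2 hx).nsmul _)
  refine le_antisymm ((add_le_add_iff_right_of_ne_top hnx).1 ?_) hge
  calc (n - 1) • w x + w (x - y)
      ≤ w (∑ i ∈ Finset.range n, x ^ i * y ^ (n - 1 - i)) + w (x - y) := by
        gcongr; exact nsmul_le_addValuation_geom_sum₂ w hxy n
    _ = w (x ^ n - y ^ n) := by rw [← w.map_mul, geom_sum₂_mul]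
    _ = (n - 1) • w x + w x := by rw [h, ← succ_nsmul, Nat.sub_one_add_one hn]

theorem stmt_5_general {s z d α β : R} {r : ℕ} (hr : r ≠ 0) (h2 : w 2 = 0)
    (hs : r • w z < 2 • w s) (hd : d ^ 2 = s ^ 2 - 4 * z ^ r)
    (hα : 2 * α ^ r = -(s + d)) (hβ : 2 * β ^ r = -(s - d)) :
    2 • w d = r • w z ∧ 2 • w α = w z ∧ 2 • w β = w z ∧
      ∀ η, η ^ r = 1 → 2 • w (α - η * β) = w z := by
  have hwd : 2 • w d = r • w z := two_nsmul_addValuation_of_sq_eq w h2 hs hd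
  have hds : w d < w s := lt_of_nsmul_lt_nsmul_right 2 (hwd ▸ hs)
  have hwα : r • w α = w d := nsmul_addValuation_of_two_mul_pow_eq w h2 hds hα
  have hwβ : r • w β = w d := by
    rw [← w.map_neg d] at hds ⊢
    exact nsmul_addValuation_of_two_mul_pow_eq w h2 hds (by rw [hβ, sub_eq_add_neg])
  have hαβ : w α = w β := nsmul_right_injective hr (hwα.trans hwβ.symm)
  have hwαz : 2 • w α = w z := nsmul_right_injective hr <| by
    simp only [smul_comm r 2, hwα, hwd]
  refine ⟨hwd, hwαz, hαβ ▸ hwαz, fun η hη ↦ ?_⟩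
  have hwηβ : w α = w (η * β) := by
    rw [w.map_mul, addValuation_eq_zero_of_pow_eq_one w hr hη, zero_add, hαβ]
  have hpow : w (α ^ r - (η * β) ^ r) = r • w α := by
    have hsub : 2 * (α ^ r - (η * β) ^ r) = 2 * -d := by
      rw [mul_pow, hη]; linear_combination hα - hβ
    have hval := congrArg w hsub
    rwa [w.map_mul, w.map_mul, h2, zero_add, zero_add, w.map_neg, ← hwα] at hval
  rw [addValuation_sub_eq_of_pow_sub_pow w hr hwηβ hpow, hwαz]

end Group

end AddValuation

namespace IsValuationExt

variable {q : ℕ} [Fact q.Prime] {v : AlgebraicClosure ℚ_[q] → ℚ}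

open Classical in
/-- The Mathlib additive valuation that agrees with `v` off `0` and takes the value `⊤` at `0`,
where `v` is unconstrained. -/
noncomputable def addValuation (hv : IsValuationExt q v) :
    AddValuation (AlgebraicClosure ℚ_[q]) (WithTop ℚ) :=
  AddValuation.of (fun x ↦ if x = 0 then ⊤ else (v x : WithTop ℚ)) (if_pos rfl)
    (by simpa using hv.1 1 1 one_ne_zero one_ne_zero)
    (fun x y ↦ by
      by_cases hx : x = 0
      · simp [hx]
      by_cases hy : y = 0
      · simp [hy]
      by_cases hxy : x + y = 0
      · simp [hxy]
      simpa only [hx, hy, hxy, if_false] using mod_cast hv.2.1 x y hx hy hxy)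
    (fun x y ↦ by
      by_cases hx : x = 0
      · simp [hx]
      by_cases hy : y = 0
      · simp [hy]
      simp [hx, hy, hv.1 x y hx hy])

variable (hv : IsValuationExt q v)

lemma addValuation_apply {x : AlgebraicClosure ℚ_[q]} (hx : x ≠ 0) :
    hv.addValuation x = (v x : WithTop ℚ) :=
  if_neg hx

lemma addValuation_intCast {n : ℤ} (hn : n ≠ 0) :
    hv.addValuation n = ((n : ℚ_[q]).valuation : ℚ) := by
  rw [hv.addValuation_apply (Int.cast_ne_zero.2 hn), ← hv.2.2 _ (Int.cast_ne_zero.2 hn),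
    map_intCast]

lemma nsmul_addValuation_intCast_lt {m n : ℤ} (hm : m ≠ 0) (hn : n ≠ 0) {k l : ℕ}
    (h : k * (m : ℚ_[q]).valuation < l * (n : ℚ_[q]).valuation) :
    k • hv.addValuation m < l • hv.addValuation n := by
  rw [hv.addValuation_intCast hm, hv.addValuation_intCast hn, ← WithTop.coe_nsmul,
    ← WithTop.coe_nsmul, WithTop.coe_lt_coe, nsmul_eq_mul, nsmul_eq_mul]
  exact mod_cast h

lemma addValuation_two (hq : Odd q) : hv.addValuation 2 = 0 := by
  have h2 : padicValNat q 2 = 0 := padicValNat_primes (by rintro rfl; exact absurd hq (by decide))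
  simpa [Padic.valuation_ofNat, h2] using hv.addValuation_intCast two_ne_zero

lemma eq_half_of_two_nsmul_addValuation_eq {x : AlgebraicClosure ℚ_[q]} {c : ℚ}
    (h : 2 • hv.addValuation x = c) : v x = c / 2 := by
  have hx : x ≠ 0 := by
    rintro rfl
    simp [two_nsmul] at h
  rw [hv.addValuation_apply hx, two_nsmul] at h
  have h' : v x + v x = c := mod_cast h
  linarith

end IsValuationExt

/-- **Lemma 5.11.** Let `r ≥ 5` be a prime and `q` an odd prime dividing both `z` and `s`,
where `z, s` are nonzero integers with `v_q(z) = 1` and `v_q(s) ≥ (r+1)/2`.  Let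
`Δ = s² - 4z^r`, let `√Δ` be a square root of `Δ`, and let `α₀, β₀` satisfy
`α₀^r = -(s+√Δ)/2` and `β₀^r = -(s-√Δ)/2`, all in an algebraic closure of `ℚ_q`.  Then
`v_q(√Δ) = r/2`, `v_q(α₀) = v_q(β₀) = 1/2`, and `v_q(α₀ - ζ_r^j β₀) = 1/2` for all
`0 ≤ j ≤ r - 1`, where `ζ_r` is a primitive `r`-th root of unity. -/
theorem stmt_5 (r q : ℕ) [Fact r.Prime] [Fact q.Prime] (hr : 5 ≤ r) (hqodd : Odd q)
    (z s : ℤ) (hz0 : z ≠ 0) (hs0 : s ≠ 0)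
    (hqz : (q : ℤ) ∣ z) (hqs : (q : ℤ) ∣ s)
    (hz : ((z : ℚ_[q])).valuation = 1)
    (hs : (r : ℤ) + 1 ≤ 2 * ((s : ℚ_[q])).valuation)
    (v : AlgebraicClosure ℚ_[q] → ℚ) (hv : IsValuationExt q v)
    (sqrtD α₀ β₀ ζ : AlgebraicClosure ℚ_[q])
    (hsq : sqrtD ^ 2 = ((s ^ 2 - 4 * z ^ r : ℤ) : AlgebraicClosure ℚ_[q]))
    (hα : α₀ ^ r = -(((s : ℤ) : AlgebraicClosure ℚ_[q]) + sqrtD) / 2)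
    (hβ : β₀ ^ r = -(((s : ℤ) : AlgebraicClosure ℚ_[q]) - sqrtD) / 2)
    (hζ : IsPrimitiveRoot ζ r) :
    v sqrtD = (r : ℚ) / 2 ∧ v α₀ = 1 / 2 ∧ v β₀ = 1 / 2 ∧
      ∀ j : ℕ, j ≤ r - 1 → v (α₀ - ζ ^ j * β₀) = 1 / 2 := by
  have hwz : hv.addValuation z = (1 : ℚ) := by rw [hv.addValuation_intCast hz0, hz, Int.cast_one]
  have hwr : r • hv.addValuation z = (r : ℚ) := by rw [hwz, ← WithTop.coe_nsmul, nsmul_one]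
  have hws : r • hv.addValuation z < 2 • hv.addValuation s :=
    hv.nsmul_addValuation_intCast_lt hz0 hs0 (by rw [hz]; push_cast; linarith)
  obtain ⟨hwd, hwα, hwβ, hwsub⟩ := stmt_5_general hv.addValuation (by omega)
    (hv.addValuation_two hqodd) hws (mod_cast hsq) (by rw [hα]; ring) (by rw [hβ]; ring)
  have half {x} {c : ℚ} (h : 2 • hv.addValuation x = c) : v x = c / 2 :=
    hv.eq_half_of_two_nsmul_addValuation_eq h
  refine ⟨half (hwd.trans hwr), half (hwα.trans hwz), half (hwβ.trans hwz), fun j _ ↦ ?_⟩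
  exact half ((hwsub _ (by rw [pow_right_comm, hζ.pow_eq_one, one_pow])).trans hwz)
end

section
/- Let r ≥ 5 be a prime and q an odd prime, and let z, s be nonzero integers satisfying (I): v_q(z) = 1 and (II): v_q(s) ≥ (r+1)/2. Then for every pair of distinct roots γ, γ′ of F(x) = (−z)^((r−1)/2)·x·h(2 − x²/z) + s in an algebraic closure of ℚ_q, one has v_q(γ − γ′) = 1/2 if q ≠ r, and v_q(γ − γ′) = 1/(r−1) + 1/2 if q = r, where v_q is the unique extension of the q-adic valuation normalized by v_q(q) = 1. In particular all pairwise differences of roots have the same valuation. -/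
open Polynomial

/-!
Substituting `x = y + z / y` turns `F(x)` into `y ^ r + (z / y) ^ r + s`, because
`h(2 - x² / z)` is a Chebyshev polynomial evaluated at `t + t⁻¹` with `t = -y² / z`. At a root of
`F`, the terms `y ^ r` and `(z / y) ^ r` have product `z ^ r` and sum `-s`; since
`r v(z) < 2 v(s)`, they have the same valuation and their quotient is `-1` modulo the maximal
ideal. The value `y ^ r` solves a quadratic equation that does not depend on the root, and
`y ↦ z / y` exchanges its two solutions, so two distinct roots come from some `a` and `b = ζ a` with
`ζ` a primitive `r`-th root of unity. In `x - x' = a (1 - ζ) (1 - z / (a b))` the last factor is a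
unit, because `(a b / z) ^ r ≡ -1` and `2` is invertible. Hence `v(x - x') = v(z) / 2 + v(1 - ζ)`.
-/

section Chebyshev

variable (R : Type*) [CommRing R]

/-- The rescaled Chebyshev polynomial of the fourth kind `Uₙ(X / 2) + Uₙ₋₁(X / 2)`, the monic
polynomial of degree `n` sending `x + x⁻¹` to `x⁻ⁿ (1 + x + ⋯ + x²ⁿ)`. For a prime `r = 2n + 1` it
is the minimal polynomial of `ζ_r + ζ_r⁻¹`. -/
noncomputable def chebyshevFourth (n : ℕ) : R[X] :=
  Chebyshev.S R n + Chebyshev.S R (n - 1)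

lemma chebyshevFourth_zero : chebyshevFourth R 0 = 1 := by
  simp [chebyshevFourth]

lemma chebyshevFourth_one : chebyshevFourth R 1 = X + 1 := by
  simp [chebyshevFourth]

lemma chebyshevFourth_add_two (n : ℕ) :
    chebyshevFourth R (n + 2) = X * chebyshevFourth R (n + 1) - chebyshevFourth R n := by
  have hS := Chebyshev.S_add_one R n
  simp only [chebyshevFourth, Nat.cast_add, Nat.cast_ofNat, Nat.cast_one, add_sub_cancel_right,
    Chebyshev.S_add_two, add_sub_assoc, show (2 - 1 : ℤ) = 1 from rfl]
  linear_combination hS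

lemma isMonicOfDegree_chebyshevFourth [Nontrivial R] (n : ℕ) :
    IsMonicOfDegree (chebyshevFourth R n) n := by
  induction n using Nat.twoStepInduction with
  | zero => rw [chebyshevFourth_zero, isMonicOfDegree_zero_iff]
  | one => simpa only [chebyshevFourth_one, C_1] using isMonicOfDegree_X_add_one (1 : R)
  | more n ih ih' =>
    have hlead : IsMonicOfDegree (X * chebyshevFourth R (n + 1)) (n + 2) := by
      rw [show n + 2 = 1 + (n + 1) by lia]
      exact (isMonicOfDegree_X R).mul ih'
    rw [chebyshevFourth_add_two]
    exact hlead.sub (by rw [ih.natDegree_eq]; lia)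

variable {R} {A : Type*} [CommRing A] [Algebra R A]

lemma sub_one_mul_aeval_chebyshevFourth {x y : A} (hxy : x * y = 1) (n : ℕ) :
    (x - 1) * aeval (x + y) (chebyshevFourth R n) = x ^ (n + 1) - y ^ n := by
  induction n using Nat.twoStepInduction with
  | zero => simp [chebyshevFourth_zero]
  | one =>
    simp only [chebyshevFourth_one, map_add, aeval_X, map_one]
    linear_combination hxy
  | more n ih ih' =>
    simp only [chebyshevFourth_add_two, map_sub, map_mul, aeval_X]
    linear_combination (x + y) * ih' - ih + (x ^ (n + 1) - y ^ n) * hxy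

end Chebyshev

section MinimalPolynomial

open IntermediateField

variable {F L : Type*} [Field F] [Field L] [Algebra F L]

lemma natDegree_minpoly_le_finrank_mul (E : Type*) [Field E] [Algebra F E] [Algebra E L]
    [IsScalarTower F E L] [FiniteDimensional F E] {x : L} (hx : IsIntegral F x) :
    (minpoly F x).natDegree ≤ Module.finrank F E * (minpoly E x).natDegree := by
  have hxE : IsIntegral E x := hx.tower_top
  have := adjoin.finiteDimensional hxE
  have : FiniteDimensional F E⟮x⟯ := .trans F E _
  rw [← adjoin.finrank hxE, Module.finrank_mul_finrank]
  have : IsScalarTower F E⟮x⟯ L := .to₁₃₄ F E E⟮x⟯ L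
  have hgen : minpoly F x = minpoly F (AdjoinSimple.gen E x) :=
    minpoly.algebraMap_eq (algebraMap E⟮x⟯ L).injective (AdjoinSimple.gen E x)
  exact hgen ▸ minpoly.natDegree_le _

lemma natDegree_minpoly_le_two_mul_natDegree_minpoly_add_inv {x : L} (hx0 : x ≠ 0)
    (hx : IsIntegral F x) :
    (minpoly F x).natDegree ≤ 2 * (minpoly F (x + x⁻¹)).natDegree := by
  let t := AdjoinSimple.gen F (x + x⁻¹)
  have hquad : IsMonicOfDegree (X ^ 2 - C t * X + 1) 2 := isMonicOfDegree_sub_add_two t 1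
  have hroot : aeval x (X ^ 2 - C t * X + 1) = 0 := by
    simp only [map_add, map_sub, map_mul, map_pow, map_one, aeval_X, aeval_C, t,
      AdjoinSimple.algebraMap_gen]
    field_simp
    ring
  have ht : IsIntegral F (x + x⁻¹) := hx.add hx.inv
  have := adjoin.finiteDimensional ht
  calc (minpoly F x).natDegree
      ≤ Module.finrank F F⟮x + x⁻¹⟯ * (minpoly F⟮x + x⁻¹⟯ x).natDegree :=
        natDegree_minpoly_le_finrank_mul _ hx
    _ ≤ (minpoly F (x + x⁻¹)).natDegree * 2 := by
        rw [adjoin.finrank ht, ← hquad.natDegree_eq]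
        gcongr
        exact natDegree_le_of_dvd (minpoly.dvd _ _ hroot) hquad.ne_zero
    _ = _ := mul_comm _ _

variable [CharZero L]

lemma minpoly_primitiveRoot_add_inv {ζ : L} {n : ℕ} (hprime : (2 * n + 1).Prime)
    (hζ : IsPrimitiveRoot ζ (2 * n + 1)) :
    minpoly ℤ (ζ + ζ⁻¹) = chebyshevFourth ℤ n := by
  have hζ0 : ζ ≠ 0 := hζ.ne_zero hprime.ne_zero
  have hg := isMonicOfDegree_chebyshevFourth ℤ n
  have hroot : aeval (ζ + ζ⁻¹) (chebyshevFourth ℤ n) = 0 := by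
    have hinv : ζ⁻¹ ^ n = ζ ^ (n + 1) := by
      rw [inv_pow]
      exact inv_eq_of_mul_eq_one_right (by rw [← pow_add, ← add_assoc, ← two_mul, hζ.pow_eq_one])
    have h := sub_one_mul_aeval_chebyshevFourth (R := ℤ) (mul_inv_cancel₀ hζ0) n
    rw [hinv, sub_self] at h
    exact (mul_eq_zero.1 h).resolve_left (sub_ne_zero.2 (hζ.ne_one hprime.one_lt))
  have hint : IsIntegral ℤ (ζ + ζ⁻¹) := ⟨_, hg.monic, hroot⟩
  refine (eq_of_monic_of_dvd_of_natDegree_le (minpoly.monic hint) hg.monic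
    (minpoly.isIntegrallyClosed_dvd hint hroot) ?_).symm
  have hdeg := natDegree_minpoly_le_two_mul_natDegree_minpoly_add_inv (F := ℚ) hζ0
    (hζ.isIntegral hprime.pos).tower_top
  rw [← cyclotomic_eq_minpoly_rat hζ hprime.pos, natDegree_cyclotomic,
    Nat.totient_prime hprime, minpoly.isIntegrallyClosed_eq_field_fractions' ℚ hint,
    (minpoly.monic hint).natDegree_map] at hdeg
  rw [hg.natDegree_eq]
  lia

lemma hpoly_eq_chebyshevFourth {n : ℕ} (hprime : (2 * n + 1).Prime) :
    hpoly (2 * n + 1) = chebyshevFourth ℤ n :=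
  minpoly_primitiveRoot_add_inv hprime (Complex.isPrimitiveRoot_exp _ hprime.ne_zero)

end MinimalPolynomial

section Fpoly

lemma map_Fpoly (r : ℕ) (z s : ℤ) (k K : Type*) [Field k] [Field K] [Algebra k K] :
    (Fpoly r z s k).map (algebraMap k K) = Fpoly r z s K := by
  have hint : (algebraMap k K).comp (Int.castRingHom k) = Int.castRingHom K := RingHom.ext_int _ _
  simp [Fpoly, Polynomial.map_comp, Polynomial.map_map, hint, map_ofNat]

variable {K : Type*} [Field K]

/- `F - s` is the Dickson polynomial of the first kind with parameter `z`. -/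
lemma eval_add_div_Fpoly {r : ℕ} [Fact r.Prime] (hr : Odd r) {z : ℤ} (s : ℤ) (hz : (z : K) ≠ 0)
    {y : K} (hy : y ≠ 0) :
    eval (y + z / y) (Fpoly r z s K) = y ^ r + (z / y) ^ r + s := by
  obtain ⟨n, rfl⟩ := hr
  set t := -(y ^ 2 / z) with ht
  set t' := -(z / y ^ 2) with ht'
  have htrace : 2 - (z : K)⁻¹ * (y + z / y) ^ 2 = t + t' := by
    rw [ht, ht']
    field_simp
    ring
  have hinv : t * t' = 1 := by
    rw [ht, ht']
    field_simp
  have hsq : -z * t = y ^ 2 := by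
    rw [ht]
    field_simp
  have hsq' : -z * t' = (z / y) ^ 2 := by
    rw [ht']
    field_simp
  have hroot : -(z / y) * t = y := by
    rw [ht]
    field_simp
  clear_value t t'
  have hW := sub_one_mul_aeval_chebyshevFourth (R := ℤ) hinv n
  set W := aeval (t + t') (chebyshevFourth ℤ n) with hWdef
  calc eval (y + z / y) (Fpoly (2 * n + 1) z s K)
      = (-z) ^ n * (y + z / y) * W + s := by
        simp [Fpoly, hpoly_eq_chebyshevFourth Fact.out, htrace, hWdef, eval_map, aeval_def]
    _ = (-z) ^ n * -(z / y) * ((t - 1) * W) + s := by linear_combination -(-z) ^ n * W * hroot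
    _ = (-z * t) ^ n * (-(z / y) * t) + (-z * t') ^ n * (z / y) + s := by
        rw [hW]
        ring
    _ = y ^ (2 * n + 1) + (z / y) ^ (2 * n + 1) + s := by
        rw [hsq, hsq', hroot]
        ring

lemma exists_add_div_eq [IsAlgClosed K] {z : K} (hz : z ≠ 0) (x : K) :
    ∃ y, y ≠ 0 ∧ y + z / y = x := by
  have hdeg : (X ^ 2 - C x * X + C z).degree ≠ 0 := by
    rw [degree_eq_natDegree (isMonicOfDegree_sub_add_two x z).ne_zero,
      (isMonicOfDegree_sub_add_two x z).natDegree_eq]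
    simp
  obtain ⟨y, hy⟩ := IsAlgClosed.exists_root _ hdeg
  have hy' : y ^ 2 - x * y + z = 0 := by simpa [IsRoot] using hy
  have hy0 : y ≠ 0 := by
    rintro rfl
    exact hz (by simpa using hy')
  refine ⟨y, hy0, ?_⟩
  field_simp
  linear_combination hy'

lemma exists_add_div_eq_of_isRoot_Fpoly [IsAlgClosed K] {r : ℕ} [Fact r.Prime] (hr : Odd r)
    {z s : ℤ} (hz : (z : K) ≠ 0) {x x' : K} (hx : (Fpoly r z s K).IsRoot x)
    (hx' : (Fpoly r z s K).IsRoot x') :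
    ∃ a b : K, a ≠ 0 ∧ b ≠ 0 ∧ a + z / a = x ∧ b + z / b = x' ∧ a ^ r = b ^ r := by
  obtain ⟨a, ha, rfl⟩ := exists_add_div_eq hz x
  obtain ⟨b, hb, rfl⟩ := exists_add_div_eq hz x'
  rw [IsRoot, eval_add_div_Fpoly hr s hz ha] at hx
  rw [IsRoot, eval_add_div_Fpoly hr s hz hb] at hx'
  have hmul {y : K} (hy : y ≠ 0) : y ^ r * (z / y) ^ r = z ^ r := by
    rw [← mul_pow, mul_div_cancel₀ _ hy]
  have hprod : (a ^ r - b ^ r) * (a ^ r - (z / b) ^ r) = 0 := by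
    linear_combination a ^ r * (hx - hx') - hmul ha + hmul hb
  rcases mul_eq_zero.1 hprod with h | h
  · exact ⟨a, b, ha, hb, rfl, rfl, sub_eq_zero.1 h⟩
  · have hswap : z / b + z / (z / b) = b + z / b := by rw [div_div_cancel₀ hz, add_comm]
    exact ⟨a, z / b, ha, div_ne_zero hz hb, rfl, hswap, sub_eq_zero.1 h⟩

end Fpoly

section Valuation

variable {Γ₀ : Type*} [LinearOrderedAddCommMonoidWithTop Γ₀]

section CommRing

variable {R : Type*} [CommRing R] (v : AddValuation R Γ₀)

lemma addValuation_prod {ι : Type*} (s : Finset ι) (f : ι → R) :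
    v (∏ i ∈ s, f i) = ∑ i ∈ s, v (f i) := by
  classical
  induction s using Finset.induction_on with
  | empty => simp
  | insert i s hi ih => rw [Finset.prod_insert hi, Finset.sum_insert hi, v.map_mul, ih]

variable {v}

lemma addValuation_eq_zero_of_pow {x : R} {n : ℕ} (hn : n ≠ 0) (hx : v (x ^ n) = 0) : v x = 0 := by
  rw [v.map_pow] at hx
  by_contra h
  rcases lt_or_gt_of_ne h with h | h
  · exact (nsmul_neg h hn).ne hx
  · exact (nsmul_pos h hn).ne' hx

lemma addValuation_sub_le_pow_sub_pow {x y : R} (hx : 0 ≤ v x) (hy : 0 ≤ v y) (n : ℕ) :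
    v (x - y) ≤ v (x ^ n - y ^ n) := by
  have hsum : 0 ≤ v (∑ i ∈ Finset.range n, x ^ i * y ^ (n - 1 - i)) := v.map_le_sum fun i _ => by
    rw [v.map_mul, v.map_pow, v.map_pow]
    exact add_nonneg (nsmul_nonneg hx _) (nsmul_nonneg hy _)
  rw [← (Commute.all x y).mul_geom_sum₂, v.map_mul]
  exact le_add_of_nonneg_right hsum

lemma addValuation_sub_one_eq_zero {u : R} {n : ℕ} (h2 : v 2 = 0) (hu : 0 ≤ v u)
    (hun : 0 < v (u ^ n + 1)) : v (u - 1) = 0 := by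
  have hsub : v (u ^ n - 1) = 0 := by
    rw [show u ^ n - 1 = u ^ n + 1 - 2 by ring, v.map_sub_eq_of_lt_right (h2 ▸ hun), h2]
  refine le_antisymm ?_ (v.map_le_sub hu v.map_one.ge)
  simpa [hsub] using addValuation_sub_le_pow_sub_pow hu v.map_one.ge n

lemma addValuation_eq_of_mul_lt_two_nsmul_add {a b : R} (h : v (a * b) < 2 • v (a + b)) :
    v a = v b := by
  rw [v.map_mul, two_nsmul] at h
  rcases lt_trichotomy (v a) (v b) with hlt | heq | hgt
  · rw [v.map_add_eq_of_lt_left hlt] at h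
    exact absurd h (add_le_add_right hlt.le _).not_gt
  · exact heq
  · rw [v.map_add_eq_of_lt_right hgt] at h
    exact absurd h (add_le_add_left hgt.le _).not_gt

variable [IsDomain R]

lemma addValuation_one_sub_eq_of_isPrimitiveRoot {ζ η : R} {r : ℕ} (hr : r ≠ 0)
    (hζ : IsPrimitiveRoot ζ r) (hη : IsPrimitiveRoot η r) : v (1 - ζ) = v (1 - η) := by
  suffices h : ∀ {ζ η : R}, IsPrimitiveRoot ζ r → IsPrimitiveRoot η r → v (1 - ζ) ≤ v (1 - η) from
    (h hζ hη).antisymm (h hη hζ)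
  intro ζ η hζ hη
  have : NeZero r := ⟨hr⟩
  obtain ⟨i, -, rfl⟩ := hζ.eq_pow_of_pow_eq_one hη.pow_eq_one
  have hvζ : v ζ = 0 := addValuation_eq_zero_of_pow hr (by rw [hζ.pow_eq_one, v.map_one])
  simpa using addValuation_sub_le_pow_sub_pow v.map_one.ge hvζ.ge i

lemma nsmul_addValuation_one_sub {ζ : R} {r : ℕ} (hr : r.Prime) (hζ : IsPrimitiveRoot ζ r) :
    (r - 1) • v (1 - ζ) = v r := by
  obtain ⟨m, rfl⟩ := Nat.exists_eq_add_one_of_ne_zero hr.ne_zero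
  have hconj : ∀ k ∈ Finset.range m, v (1 - ζ ^ (k + 1)) = v (1 - ζ) := fun k hk => by
    have hcop : (k + 1).Coprime (m + 1) :=
      (Nat.coprime_of_lt_prime k.succ_ne_zero (by simpa using hk) hr).symm
    exact addValuation_one_sub_eq_of_isPrimitiveRoot hr.ne_zero (hζ.pow_of_coprime _ hcop) hζ
  rw [Nat.cast_add_one, ← hζ.prod_one_sub_pow_eq_order, addValuation_prod,
    Finset.sum_congr rfl hconj, Finset.sum_const, Finset.card_range, Nat.add_sub_cancel]

end CommRing

variable {K : Type*} [Field K] {v : AddValuation K Γ₀}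

lemma addValuation_div_eq_zero {a b : K} (hb : b ≠ 0) (hab : v a = v b) : v (a / b) = 0 := by
  rw [div_eq_mul_inv, v.map_mul, hab, ← v.map_mul, mul_inv_cancel₀ hb, v.map_one]

lemma addValuation_div_add_one_pos {a b : K} (hb : b ≠ 0) (h : v (a * b) < 2 • v (a + b)) :
    0 < v (a / b + 1) := by
  have hadd : v (a / b + 1) + v b = v (a + b) := by
    rw [← v.map_mul, add_one_mul, div_mul_cancel₀ _ hb]
  have heq := addValuation_eq_of_mul_lt_two_nsmul_add h
  rw [v.map_mul, heq, ← two_nsmul] at h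
  by_contra! hnonpos
  exact h.not_ge (nsmul_le_nsmul_right (hadd ▸ add_le_of_nonpos_left hnonpos) 2)

lemma two_nsmul_addValuation_add_div_sub {z a b : K} {r : ℕ} (hr : r ≠ 0) (hz : z ≠ 0)
    (ha : a ≠ 0) (hb : b ≠ 0) (hab : a ^ r = b ^ r) (h2 : v 2 = 0)
    (hlt : r • v z < 2 • v (a ^ r + (z / a) ^ r)) :
    2 • v (a + z / a - (b + z / b)) = v z + 2 • v (1 - b / a) := by
  have hza : (z / a) ^ r ≠ 0 := pow_ne_zero r (div_ne_zero hz ha)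
  have hlt' : v (a ^ r * (z / a) ^ r) < 2 • v (a ^ r + (z / a) ^ r) := by
    rwa [← mul_pow, mul_div_cancel₀ _ ha, v.map_pow]
  have hquot : v (a ^ r / (z / a) ^ r) = 0 :=
    addValuation_div_eq_zero hza (addValuation_eq_of_mul_lt_two_nsmul_add hlt')
  have hta : (a ^ 2 / z) ^ r = a ^ r / (z / a) ^ r := by
    rw [← div_pow]
    congr 1
    field_simp
  have hu : (a * b / z) ^ r = a ^ r / (z / a) ^ r := by
    rw [div_pow, mul_pow, ← hab, ← mul_pow, ← div_pow, ← sq, hta]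
  have hvt : v (a ^ 2 / z) = 0 := addValuation_eq_zero_of_pow hr (hta ▸ hquot)
  have hvu : v (a * b / z) = 0 := addValuation_eq_zero_of_pow hr (hu ▸ hquot)
  have hvu' : v (a * b / z - 1) = 0 :=
    addValuation_sub_one_eq_zero h2 hvu.ge (hu ▸ addValuation_div_add_one_pos hza hlt')
  have hfactor : (a + z / a - (b + z / b)) ^ 2 * (a * b / z) ^ 2
      = z * (a ^ 2 / z) * (1 - b / a) ^ 2 * (a * b / z - 1) ^ 2 := by
    field_simp
    ring
  simpa [hvt, hvu, hvu'] using congrArg v hfactor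

theorem nsmul_addValuation_sub_of_isRoot_Fpoly [IsAlgClosed K] {r : ℕ} [Fact r.Prime] (hr : Odd r)
    {z s : ℤ} (hz : (z : K) ≠ 0) (h2 : v 2 = 0) (hzs : r • v z < 2 • v s) {x x' : K}
    (hx : (Fpoly r z s K).IsRoot x) (hx' : (Fpoly r z s K).IsRoot x') (hne : x ≠ x') :
    (r - 1) • 2 • v (x - x') = (r - 1) • v z + 2 • v r := by
  have hprime : r.Prime := Fact.out
  obtain ⟨a, b, ha, hb, rfl, rfl, hab⟩ := exists_add_div_eq_of_isRoot_Fpoly hr hz hx hx'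
  have hlt : r • v z < 2 • v (a ^ r + (z / a) ^ r) := by
    rw [IsRoot, eval_add_div_Fpoly hr s hz ha] at hx
    rwa [eq_neg_of_add_eq_zero_left hx, v.map_neg]
  have hζ : IsPrimitiveRoot (b / a) r := by
    have hpow : (b / a) ^ r = 1 := by rw [div_pow, hab, div_self (pow_ne_zero r hb)]
    have hne_one : b / a ≠ 1 := fun h => hne (by rw [(div_eq_one_iff_eq ha).1 h])
    exact orderOf_eq_prime hpow hne_one ▸ IsPrimitiveRoot.orderOf _
  rw [two_nsmul_addValuation_add_div_sub hprime.ne_zero hz ha hb hab h2 hlt, smul_add,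
    smul_comm, nsmul_addValuation_one_sub hprime hζ]

end Valuation

section Padic

/-- Adding the value `⊤` at `0` turns a map satisfying the valuation axioms away from `0` into an
additive valuation. -/
noncomputable def addValuationOfNeZero {R Γ : Type*} [Ring R] [IsDomain R] [AddCommGroup Γ]
    [LinearOrder Γ] [IsOrderedAddMonoid Γ] (v : R → Γ)
    (hmul : ∀ x y, x ≠ 0 → y ≠ 0 → v (x * y) = v x + v y)
    (hadd : ∀ x y, x ≠ 0 → y ≠ 0 → x + y ≠ 0 → min (v x) (v y) ≤ v (x + y)) :
    AddValuation R (WithTop Γ) :=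
  open Classical in
  .of (fun x => if x = 0 then ⊤ else v x) (if_pos rfl)
    (by simpa using hmul 1 1 one_ne_zero one_ne_zero)
    (fun x y => by
      rcases eq_or_ne x 0 with rfl | hx
      · rw [zero_add]
        exact min_le_right _ _
      rcases eq_or_ne y 0 with rfl | hy
      · rw [add_zero]
        exact min_le_left _ _
      rcases eq_or_ne (x + y) 0 with hxy | hxy
      · simp [hxy]
      simpa only [hx, hy, hxy, if_false, ← WithTop.coe_min, WithTop.coe_le_coe]
        using hadd x y hx hy hxy)
    (fun x y => by
      rcases eq_or_ne x 0 with rfl | hx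
      · simp
      rcases eq_or_ne y 0 with rfl | hy
      · simp
      simp [hx, hy, hmul x y hx hy])

variable {q : ℕ} [Fact q.Prime] {v : AlgebraicClosure ℚ_[q] → ℚ}

namespace IsValuationExt

/-- The additive valuation on `ℚ̄_q` underlying `v`, with value `⊤` at `0`. -/
noncomputable def toAddValuation (hv : IsValuationExt q v) :
    AddValuation (AlgebraicClosure ℚ_[q]) (WithTop ℚ) :=
  addValuationOfNeZero v hv.1 hv.2.1

lemma toAddValuation_apply (hv : IsValuationExt q v) {x : AlgebraicClosure ℚ_[q]} (hx : x ≠ 0) :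
    hv.toAddValuation x = v x :=
  if_neg hx

lemma toAddValuation_intCast (hv : IsValuationExt q v) {m : ℤ} (hm : m ≠ 0) :
    hv.toAddValuation m = (((m : ℚ_[q]).valuation : ℚ) : WithTop ℚ) := by
  have hmq : (m : ℚ_[q]) ≠ 0 := Int.cast_ne_zero.2 hm
  rw [← map_intCast (algebraMap ℚ_[q] (AlgebraicClosure ℚ_[q])),
    toAddValuation_apply hv (by simpa using hmq), hv.2.2 _ hmq]

lemma toAddValuation_prime (hv : IsValuationExt q v) {p : ℕ} (hp : p.Prime) :
    hv.toAddValuation p = ((if q = p then 1 else 0 : ℚ) : WithTop ℚ) := by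
  have h := hv.toAddValuation_intCast (Int.natCast_ne_zero.2 hp.ne_zero)
  have hval : padicValNat q p = if q = p then 1 else 0 := by
    split_ifs with hqp
    · exact hqp ▸ padicValNat_self
    · exact padicValNat.eq_zero_of_not_dvd
        (mt (Nat.prime_dvd_prime_iff_eq Fact.out hp).1 hqp)
  rw [Int.cast_natCast, Int.cast_natCast, Padic.valuation_natCast, hval] at h
  simpa using h

end IsValuationExt

end Padic

/- `Padic.valuation` sends `0` to `0`, whereas `v(s) = ∞` is meant when `s = 0`. -/
theorem stmt_6_general (r q : ℕ) [Fact r.Prime] [Fact q.Prime] (hr : Odd r) (hq : Odd q)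
    (z s : ℤ) (hz : z ≠ 0)
    (hzs : s ≠ 0 → r * (z : ℚ_[q]).valuation < 2 * (s : ℚ_[q]).valuation)
    (v : AlgebraicClosure ℚ_[q] → ℚ) (hv : IsValuationExt q v)
    (γ γ' : AlgebraicClosure ℚ_[q])
    (hγ : aeval γ (Fpoly r z s ℚ_[q]) = 0) (hγ' : aeval γ' (Fpoly r z s ℚ_[q]) = 0)
    (hne : γ ≠ γ') :
    v (γ - γ') = (if q = r then 1 / ((r : ℚ) - 1) else 0) + (z : ℚ_[q]).valuation / 2 := by
  have hprime : r.Prime := Fact.out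
  have hzK : (z : AlgebraicClosure ℚ_[q]) ≠ 0 := by
    rw [← map_intCast (algebraMap ℚ_[q] (AlgebraicClosure ℚ_[q]))]
    simpa using hz
  have h2 : hv.toAddValuation 2 = 0 := by
    have hq2 : q ≠ 2 := by rintro rfl; exact absurd hq (by decide)
    simpa [hq2] using hv.toAddValuation_prime Nat.prime_two
  have hlt : r • hv.toAddValuation z < 2 • hv.toAddValuation s := by
    rw [hv.toAddValuation_intCast hz, ← WithTop.coe_nsmul]
    rcases eq_or_ne s 0 with rfl | hs
    · rw [Int.cast_zero, AddValuation.map_zero, two_nsmul, top_add]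
      exact WithTop.coe_lt_top _
    · rw [hv.toAddValuation_intCast hs, ← WithTop.coe_nsmul, WithTop.coe_lt_coe, nsmul_eq_mul,
        nsmul_eq_mul]
      exact_mod_cast hzs hs
  rw [← eval_map_algebraMap, map_Fpoly] at hγ hγ'
  have h := nsmul_addValuation_sub_of_isRoot_Fpoly hr hzK h2 hlt hγ hγ' hne
  rw [hv.toAddValuation_apply (sub_ne_zero.2 hne), hv.toAddValuation_intCast hz,
    hv.toAddValuation_prime hprime] at h
  norm_cast at h
  rw [nsmul_eq_mul, nsmul_eq_mul, nsmul_eq_mul, nsmul_eq_mul, Nat.cast_sub hprime.one_le] at h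
  push_cast at h
  have hr1 : (r : ℚ) - 1 ≠ 0 := sub_ne_zero.2 (Nat.cast_ne_one.2 hprime.ne_one)
  have hdiff : v (γ - γ') = (if q = r then 1 else 0) / (r - 1) + (z : ℚ_[q]).valuation / 2 := by
    field_simp
    linear_combination h
  rw [hdiff, ite_div, zero_div]

/-- **Proposition 5.9 (cluster picture).** Let `r ≥ 5` be a prime and `q` an odd prime, and
let `z, s` be nonzero integers with `v_q(z) = 1` and `v_q(s) ≥ (r+1)/2`.  Then for every
pair of distinct roots `γ, γ'` of `F(x)` in an algebraic closure of `ℚ_q`, one has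
`v_q(γ - γ') = 1/2` if `q ≠ r` and `v_q(γ - γ') = 1/(r-1) + 1/2` if `q = r`. -/
theorem stmt_6 (r q : ℕ) [Fact r.Prime] [Fact q.Prime] (hr : 5 ≤ r) (hqodd : Odd q)
    (z s : ℤ) (hz0 : z ≠ 0) (hs0 : s ≠ 0)
    (hz : ((z : ℚ_[q])).valuation = 1)
    (hs : (r : ℤ) + 1 ≤ 2 * ((s : ℚ_[q])).valuation)
    (v : AlgebraicClosure ℚ_[q] → ℚ) (hv : IsValuationExt q v)
    (γ γ' : AlgebraicClosure ℚ_[q])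
    (hγ : aeval γ (Fpoly r z s ℚ_[q]) = 0) (hγ' : aeval γ' (Fpoly r z s ℚ_[q]) = 0)
    (hne : γ ≠ γ') :
    v (γ - γ') = if q = r then 1 / ((r : ℚ) - 1) + 1 / 2 else 1 / 2 := by
  have hrodd : Odd r := Nat.Prime.odd_of_ne_two Fact.out (by lia)
  rw [stmt_6_general r q hrodd hqodd z s hz0 (by lia) v hv γ γ' hγ hγ' hne, hz]
  split_ifs <;> norm_num
end

section
/- Let R be a discrete valuation ring with maximal ideal m and normalized valuation v (v of a uniformizer equals 1), let r be a prime number with v(r) = 2, and let u ∈ R be an element with v(u^r − u) = 1. Then the polynomial (X + u)^r − u ∈ R[X] is Eisenstein at m. Consequently, X^r − u is irreducible over the fraction field of R. -/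
open Polynomial

/-! If `p ∈ P` and `q` is a power of `p`, then `(X + u) ^ q ≡ X ^ q + u ^ q` modulo `P` by the
Frobenius identity. Hence `(X + u) ^ q - a` is Eisenstein at `P` as soon as its constant
coefficient `u ^ q - a` lies in `P` but not in `P ^ 2`. The translation `X ↦ X + u` is an
automorphism of `R[X]`, so `X ^ q - a` is irreducible over `R`, and Gauss's lemma carries
irreducibility over to the fraction field. -/

theorem coeff_X_add_C_pow_prime_pow_mem {R : Type*} [CommSemiring R] {I : Ideal R} {p n i : ℕ}
    (hp : p.Prime) (hpI : (p : R) ∈ I) (u : R) (hi₀ : i ≠ 0) (hi : i ≠ p ^ n) :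
    ((X + C u) ^ p ^ n).coeff i ∈ I := by
  have p_dvd_choose : (p : R) ∣ ((p ^ n).choose i : R) :=
    Nat.cast_dvd_cast (hp.dvd_choose_pow hi₀ hi)
  rw [coeff_X_add_C_pow]
  exact I.mul_mem_left _ (I.mem_of_dvd p_dvd_choose hpI)

theorem isEisensteinAt_X_add_C_pow_prime_pow_sub_C {R : Type*} [CommRing R] {P : Ideal R}
    {p n : ℕ} {u a : R} (hP : P ≠ ⊤) (hp : p.Prime) (hpP : (p : R) ∈ P)
    (hmem : u ^ p ^ n - a ∈ P) (hnotMem : u ^ p ^ n - a ∉ P ^ 2) :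
    ((X + C u) ^ p ^ n - C a).IsEisensteinAt P := by
  have : Nontrivial R := (Submodule.nontrivial_iff R).mp ⟨P, ⊤, hP⟩
  have natDegree_eq : ((X + C u) ^ p ^ n - C a).natDegree = p ^ n := by
    rw [natDegree_sub_C, natDegree_pow_X_add_C]
  have monic : ((X + C u) ^ p ^ n - C a).Monic := by
    simpa using (monic_X_pow_sub_C a (pow_ne_zero n hp.ne_zero)).comp_X_add_C u
  have coeff_zero : ((X + C u) ^ p ^ n - C a).coeff 0 = u ^ p ^ n - a := by
    simp [coeff_zero_eq_eval_zero]
  refine monic.isEisensteinAt_of_mem_of_notMem hP (fun {i} hi ↦ ?_) (coeff_zero ▸ hnotMem)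
  obtain rfl | hi₀ := eq_or_ne i 0
  · exact coeff_zero ▸ hmem
  · rw [coeff_sub, coeff_C_of_ne_zero hi₀, sub_zero]
    exact coeff_X_add_C_pow_prime_pow_mem hp hpP u hi₀ (natDegree_eq ▸ hi).ne

theorem irreducible_taylor_iff {R : Type*} [CommRing R] {f : R[X]} (u : R) :
    Irreducible (taylor u f) ↔ Irreducible f :=
  MulEquiv.irreducible_iff (taylorEquiv u)

theorem irreducible_map_of_isEisensteinAt_taylor {R K : Type*} [CommRing R] [IsDomain R]
    [IsIntegrallyClosed R] [Field K] [Algebra R K] [IsFractionRing R K] {P : Ideal R}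
    (hP : P.IsPrime) {f : R[X]} (hf : f.Monic) (hdeg : 0 < f.natDegree) {u : R}
    (hE : (taylor u f).IsEisensteinAt P) : Irreducible (f.map (algebraMap R K)) := by
  have taylor_monic : (taylor u f).Monic := hf.comp_X_add_C u
  have taylor_irreducible : Irreducible (taylor u f) :=
    hE.irreducible hP taylor_monic.isPrimitive (by rwa [natDegree_taylor])
  exact hf.irreducible_iff_irreducible_map_fraction_map.mp
    ((irreducible_taylor_iff u).mp taylor_irreducible)

theorem mem_maximalIdeal_pow_iff_le_addVal {R : Type*} [CommRing R] [IsDomain R]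
    [IsDiscreteValuationRing R] {x : R} {n : ℕ} :
    x ∈ IsLocalRing.maximalIdeal R ^ n ↔ n ≤ IsDiscreteValuationRing.addVal R x := by
  obtain ⟨ϖ, hϖ⟩ := IsDiscreteValuationRing.exists_irreducible R
  rw [hϖ.maximalIdeal_eq, Ideal.span_singleton_pow, Ideal.mem_span_singleton,
    ← IsDiscreteValuationRing.addVal_le_iff_dvd, hϖ.addVal_pow]

theorem mem_maximalIdeal_iff_one_le_addVal {R : Type*} [CommRing R] [IsDomain R]
    [IsDiscreteValuationRing R] {x : R} :
    x ∈ IsLocalRing.maximalIdeal R ↔ 1 ≤ IsDiscreteValuationRing.addVal R x := by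
  simpa only [pow_one, Nat.cast_one] using mem_maximalIdeal_pow_iff_le_addVal (x := x) (n := 1)

theorem stmt_8_general {R : Type*} (K : Type*) [CommRing R] [IsDomain R] [IsIntegrallyClosed R]
    [Field K] [Algebra R K] [IsFractionRing R K] {P : Ideal R} (hP : P.IsPrime) {p n : ℕ}
    (hp : p.Prime) (hpP : (p : R) ∈ P) {u a : R} (hmem : u ^ p ^ n - a ∈ P)
    (hnotMem : u ^ p ^ n - a ∉ P ^ 2) :
    ((X + C u) ^ p ^ n - C a).IsEisensteinAt P ∧
      Irreducible ((X ^ p ^ n - C a).map (algebraMap R K)) := by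
  have hE : ((X + C u) ^ p ^ n - C a).IsEisensteinAt P :=
    isEisensteinAt_X_add_C_pow_prime_pow_sub_C hP.ne_top hp hpP hmem hnotMem
  have hpn : 0 < p ^ n := pow_pos hp.pos n
  have taylor_eq : taylor u (X ^ p ^ n - C a) = (X + C u) ^ p ^ n - C a := by
    rw [map_sub, taylor_X_pow, taylor_C]
  exact ⟨hE, irreducible_map_of_isEisensteinAt_taylor hP (monic_X_pow_sub_C a hpn.ne')
    (by rwa [natDegree_X_pow_sub_C]) (taylor_eq ▸ hE)⟩

/-- **Lemma 5.19 (abstract form).** Let `R` be a discrete valuation ring with maximal ideal `m`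
and normalized additive valuation `v` (so `v` of a uniformizer equals `1`), let `r` be a prime
with `v(r) = 2`, and let `u ∈ R` with `v(u^r - u) = 1`. Then `(X + u)^r - u` is Eisenstein
at `m`; consequently `X^r - u` is irreducible over the fraction field of `R`. -/
theorem stmt_8 (R : Type*) [CommRing R] [IsDomain R] [IsDiscreteValuationRing R]
    (r : ℕ) (hr : r.Prime)
    (hvr : IsDiscreteValuationRing.addVal R (r : R) = 2)
    (u : R) (hu : IsDiscreteValuationRing.addVal R (u ^ r - u) = 1) :
    ((X + C u) ^ r - C u).IsEisensteinAt (IsLocalRing.maximalIdeal R) ∧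
    Irreducible ((X ^ r - C u).map (algebraMap R (FractionRing R))) := by
  have hrm : (r : R) ∈ IsLocalRing.maximalIdeal R :=
    mem_maximalIdeal_iff_one_le_addVal.mpr (hvr ▸ one_le_two)
  have hum : u ^ r - u ∈ IsLocalRing.maximalIdeal R :=
    mem_maximalIdeal_iff_one_le_addVal.mpr hu.ge
  have hum_sq : u ^ r - u ∉ IsLocalRing.maximalIdeal R ^ 2 := by
    simp [mem_maximalIdeal_pow_iff_le_addVal, hu]
  simpa only [pow_one] using stmt_8_general (n := 1) (FractionRing R) inferInstance hr hrm
    (by rwa [pow_one]) (by rwa [pow_one])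
end

section
/- Let r ≥ 5 be a prime and let z, s be nonzero integers with v_r(z) = 1 and v_r(s) = (r+1)/2. Set Δ = s² − 4z^r, fix a square root √Δ in an algebraic closure of ℚ_r, let F′ = ℚ_r(√Δ), let π = √Δ / r^((r−1)/2) (a uniformizer of F′), let u = −(s + √Δ)/(2π^r), and fix α₀ in the algebraic closure with α₀^r = −(s + √Δ)/2. Then (α₀/π)^r = u, the polynomial X^r − u is irreducible over F′ and is the minimal polynomial of α₀/π over F′, and ℚ_r(α₀) = F′(α₀/π). -/
open Polynomial

open scoped IntermediateField

/-!
Write `r = 2m + 1`. Since `v_r(Δ) = r`, the element `π = √Δ / r ^ m` satisfies `v_r(π) = 1/2`, and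
`u = a + bπ` with `a`, `b` units of `ℤ_r`. An `r`-th root of `u` in `F′ = ℚ_r(π)` would be of the
form `c + dπ` with `c`, `d` in `ℤ_r`. As `(c + dπ) ^ r ≡ c ^ r` modulo `(r, π ^ r) ⊆ (π ^ 2)`, this
would give `v_r(u - c ^ r) ≥ 1`, whereas `u - c ^ r = (a - c ^ r) + bπ` has valuation at most
`v_r(bπ) = 1/2`. Hence `u` is not an `r`-th power in `F′`, which for prime `r` makes `X ^ r - u`
irreducible.
-/

section Ultrametric

variable {K L : Type*} [NormedField L] [IsUltrametricDist L]

theorem norm_add_pow_prime_sub_pow_le {p : ℕ} (hp : p.Prime) {x y : L} (hx : ‖x‖ ≤ 1)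
    (hy : ‖y‖ ≤ 1) : ‖(x + y) ^ p - x ^ p‖ ≤ max (‖y‖ ^ p) ‖(p : L)‖ := by
  lift x to (NormedField.valuation (K := L)).integer using hx
  lift y to (NormedField.valuation (K := L)).integer using hy
  obtain ⟨t, ht⟩ := exists_add_pow_prime_eq hp x y
  have hsub : ((x : L) + y) ^ p - (x : L) ^ p = (y : L) ^ p + p * ((x * y * t : _) : L) := by
    have := congrArg ((↑) : (NormedField.valuation (K := L)).integer → L) ht
    push_cast at this ⊢
    rw [this]
    ring
  rw [hsub, ← norm_pow]
  refine (IsUltrametricDist.norm_add_le_max _ _).trans (max_le_max_left _ ?_)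
  rw [norm_mul]
  exact mul_le_of_le_one_right (norm_nonneg _) (x * y * t).2

variable [NormedField K] [NormedAlgebra K L]

theorem norm_algebraMap_add_algebraMap_mul {π : L} (hπ : ∀ x : K, ‖x‖ ≠ ‖π‖) (x y : K) :
    ‖algebraMap K L x + algebraMap K L y * π‖ = max ‖x‖ (‖y‖ * ‖π‖) := by
  have hne : y ≠ 0 → ‖algebraMap K L x‖ ≠ ‖algebraMap K L y * π‖ := by
    intro hy h
    refine hπ (x / y) ?_
    rw [norm_div, div_eq_iff (norm_ne_zero_iff.2 hy)]
    simpa [mul_comm] using h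
  rcases eq_or_ne y 0 with rfl | hy
  · simp
  · simp [IsUltrametricDist.norm_add_eq_max_of_norm_ne_norm (hne hy)]

theorem add_mul_pow_prime_ne_add_mul {p : ℕ} (hp : p.Prime) (hpK : ‖(p : K)‖ < 1) {π : L}
    (hπ1 : ‖π‖ < 1) (hπ : ∀ x : K, ‖x‖ < 1 → ‖x‖ < ‖π‖) {a b : K} (ha : ‖a‖ ≤ 1) (hb : ‖b‖ = 1)
    (c d : K) :
    (algebraMap K L c + algebraMap K L d * π) ^ p ≠ algebraMap K L a + algebraMap K L b * π := by
  intro h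
  have hne (x : K) : ‖x‖ ≠ ‖π‖ := fun hx ↦ (hπ x (hx ▸ hπ1)).ne hx
  have norm_eq := norm_algebraMap_add_algebraMap_mul hne
  have hmax : max ‖c‖ (‖d‖ * ‖π‖) ≤ 1 := by
    refine (pow_le_one_iff_of_nonneg (le_max_of_le_left (norm_nonneg c)) hp.ne_zero).1 ?_
    rw [← norm_eq, ← norm_pow, h, norm_eq, hb, one_mul]
    exact max_le ha hπ1.le
  obtain ⟨hc, hdπ⟩ := max_le_iff.1 hmax
  have hd : ‖d‖ ≤ 1 := by
    by_contra! hd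
    have := hπ d⁻¹ (by simpa using inv_lt_one_of_one_lt₀ hd)
    rw [norm_inv, inv_lt_iff_one_lt_mul₀' (by linarith)] at this
    linarith
  have hπ0 : 0 < ‖π‖ := by simpa using hπ 0 (by simp)
  have hlt : ‖(algebraMap K L c + algebraMap K L d * π) ^ p - algebraMap K L c ^ p‖ < ‖π‖ := by
    refine (norm_add_pow_prime_sub_pow_le hp (by simpa) (by simpa)).trans_lt (max_lt ?_ ?_)
    · rw [norm_mul, norm_algebraMap', mul_pow]
      exact (mul_le_of_le_one_left (by positivity) (pow_le_one₀ (norm_nonneg d) hd)).trans_lt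
        (pow_lt_self_of_lt_one₀ hπ0 hπ1 hp.one_lt)
    · simpa only [← norm_algebraMap' L (p : K), map_natCast] using hπ p hpK
  have hle : ‖π‖ ≤ ‖(algebraMap K L c + algebraMap K L d * π) ^ p - algebraMap K L c ^ p‖ := by
    rw [h, add_sub_right_comm, ← map_pow, ← map_sub, norm_eq, hb, one_mul]
    exact le_max_right _ _
  exact hlt.not_ge hle

end Ultrametric

section Field

variable {K L : Type*} [Field K] [Field L] [Algebra K L]

theorem exists_eq_add_mul_of_mem_adjoin_simple {δ : L} {D : K} (hδ : δ ^ 2 = algebraMap K L D)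
    {x : L} (hx : x ∈ K⟮δ⟯) : ∃ c d : K, x = algebraMap K L c + algebraMap K L d * δ := by
  have hint : IsIntegral K δ := .of_pow two_pos (hδ ▸ isIntegral_algebraMap)
  rw [← IntermediateField.mem_toSubalgebra,
    IntermediateField.adjoin_simple_toSubalgebra_of_isAlgebraic hint.isAlgebraic] at hx
  induction hx using Algebra.adjoin_induction with
  | mem x hx => exact ⟨0, 1, by simpa using hx⟩
  | algebraMap c => exact ⟨c, 0, by simp⟩
  | add x y _ _ hx hy =>
    obtain ⟨c, d, rfl⟩ := hx
    obtain ⟨c', d', rfl⟩ := hy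
    exact ⟨c + c', d + d', by simp only [map_add]; ring⟩
  | mul x y _ _ hx hy =>
    obtain ⟨c, d, rfl⟩ := hx
    obtain ⟨c', d', rfl⟩ := hy
    refine ⟨c * c' + d * d' * D, c * d' + d * c', ?_⟩
    simp only [map_add, map_mul, ← hδ]
    ring

theorem adjoin_simple_div_algebraMap (x : L) {c : K} (hc : c ≠ 0) :
    K⟮x / algebraMap K L c⟯ = K⟮x⟯ := by
  have hcL : algebraMap K L c ≠ 0 := by simpa
  apply le_antisymm <;> rw [IntermediateField.adjoin_simple_le_iff]
  · exact div_mem (IntermediateField.mem_adjoin_simple_self K x) (algebraMap_mem _ c)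
  · simpa only [div_mul_cancel₀ x hcL] using
      mul_mem (IntermediateField.mem_adjoin_simple_self K (x / algebraMap K L c))
        (algebraMap_mem _ c)

theorem adjoin_simple_eq_adjoin_pair_div {α δ π : L} (hδ : δ ∈ K⟮α⟯) (hπ : π ∈ K⟮δ⟯)
    (hπ0 : π ≠ 0) : K⟮α⟯ = K⟮δ, α / π⟯ := by
  apply le_antisymm
  · have hαπ : α / π * π ∈ K⟮δ, α / π⟯ :=
      mul_mem (IntermediateField.subset_adjoin _ _ (by simp))
        (IntermediateField.adjoin.mono K _ _ (by simp) hπ)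
    rwa [div_mul_cancel₀ α hπ0, ← IntermediateField.adjoin_simple_le_iff] at hαπ
  · have hα := IntermediateField.mem_adjoin_simple_self K α
    rw [IntermediateField.adjoin_le_iff, Set.pair_subset_iff]
    exact ⟨hδ, div_mem hα (IntermediateField.adjoin_simple_le_iff.2 hδ hπ)⟩

theorem mem_adjoin_simple_of_pow_eq_neg_add_div_two [NeZero (2 : L)] {α δ : L} {s : K} {n : ℕ}
    (hα : α ^ n = -(algebraMap K L s + δ) / 2) : δ ∈ K⟮α⟯ := by
  have hδ : δ = -(2 * α ^ n) - algebraMap K L s := by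
    rw [hα, mul_div_cancel₀ _ two_ne_zero]
    ring
  rw [hδ]
  exact sub_mem (neg_mem (mul_mem (ofNat_mem _ 2)
    (pow_mem (IntermediateField.mem_adjoin_simple_self K α) n))) (algebraMap_mem _ s)

theorem minpoly_eq_X_pow_sub_C_of_irreducible {n : ℕ} (hn : n ≠ 0) {x : L} {a : K}
    (hx : x ^ n = algebraMap K L a) (hirr : Irreducible (X ^ n - C a)) :
    minpoly K x = X ^ n - C a :=
  (minpoly.eq_of_irreducible_of_monic hirr (by simp [hx]) (monic_X_pow_sub_C a hn)).symm

theorem add_mul_div_pow_odd {π : L} {P : K} (hπ : π ^ 2 = algebraMap K L P) (hP : P ≠ 0)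
    (s t : K) (m : ℕ) :
    (algebraMap K L s + algebraMap K L t * π) / π ^ (2 * m + 1) =
      algebraMap K L (t / P ^ m) + algebraMap K L (s / P ^ (m + 1)) * π := by
  have hPL : algebraMap K L P ≠ 0 := by simpa
  have hπ0 : π ≠ 0 := by
    rintro rfl
    simp [← hπ] at hPL
  rw [pow_succ π, pow_mul, hπ]
  simp only [map_div₀, map_pow]
  field_simp
  rw [pow_succ, ← hπ]
  ring

end Field

section Padic

variable {p : ℕ} [hp : Fact p.Prime]

theorem padic_norm_eq_inv_pow_of_valuation_eq {x : ℚ_[p]} {n : ℕ} (hn : n ≠ 0)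
    (hx : x.valuation = n) : ‖x‖ = (p : ℝ)⁻¹ ^ n := by
  have hx0 : x ≠ 0 := by
    rintro rfl
    simp_all [eq_comm]
  rw [Padic.norm_eq_zpow_neg_valuation hx0, hx, zpow_neg, zpow_natCast, inv_pow]

theorem padic_norm_two_eq_one (h2 : p ≠ 2) : ‖(2 : ℚ_[p])‖ = 1 :=
  Padic.norm_natCast_eq_one_iff.2 ((Nat.coprime_primes hp.out Nat.prime_two).2 h2)

theorem norm_lt_of_norm_lt_one_of_sq_eq_inv {x : ℚ_[p]} (hx : ‖x‖ < 1) {ρ : ℝ} (hρ0 : 0 ≤ ρ)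
    (hρ : ρ ^ 2 = (p : ℝ)⁻¹) : ‖x‖ < ρ := by
  have hle : ‖x‖ ≤ (p : ℝ)⁻¹ := by
    simpa using (Padic.norm_lt_pow_iff_norm_le_pow_sub_one x 0).1 (by simpa)
  have hρ1 : ρ < 1 := by
    rw [← sq_lt_one_iff₀ hρ0, hρ]
    exact inv_lt_one_of_one_lt₀ (by exact_mod_cast hp.out.one_lt)
  have hρpos : 0 < ρ := hρ0.lt_of_ne' (by rintro rfl; simp [hp.out.ne_zero, eq_comm] at hρ)
  calc
    ‖x‖ ≤ ρ ^ 2 := hρ ▸ hle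
    _ < ρ := pow_lt_self_of_lt_one₀ hρpos hρ1 one_lt_two

theorem pow_prime_ne_of_mem_adjoin {L : Type*} [Field L] [Algebra ℚ_[p] L] {π : L} {P a b : ℚ_[p]}
    (hπ : π ^ 2 = algebraMap ℚ_[p] L P) (hP : ‖P‖ = (p : ℝ)⁻¹) (ha : ‖a‖ ≤ 1) (hb : ‖b‖ = 1)
    {y : L} (hy : y ∈ ℚ_[p]⟮π⟯) : y ^ p ≠ algebraMap ℚ_[p] L a + algebraMap ℚ_[p] L b * π := by
  have hint : IsIntegral ℚ_[p] π := .of_pow two_pos (hπ ▸ isIntegral_algebraMap)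
  have : FiniteDimensional ℚ_[p] ℚ_[p]⟮π⟯ := IntermediateField.adjoin.finiteDimensional hint
  let := spectralNorm.normedField ℚ_[p] ℚ_[p]⟮π⟯
  let := spectralNorm.normedAlgebra ℚ_[p] ℚ_[p]⟮π⟯
  have : IsUltrametricDist ℚ_[p]⟮π⟯ := .of_normedAlgebra ℚ_[p]
  set ϖ : ℚ_[p]⟮π⟯ := IntermediateField.AdjoinSimple.gen ℚ_[p] π
  have hϖ : ‖ϖ‖ ^ 2 = (p : ℝ)⁻¹ := by
    have : ϖ ^ 2 = algebraMap ℚ_[p] ℚ_[p]⟮π⟯ P := Subtype.ext hπ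
    rw [← norm_pow, this, norm_algebraMap', hP]
  have hϖ1 : ‖ϖ‖ < 1 := by
    rw [← sq_lt_one_iff₀ (norm_nonneg _), hϖ]
    exact inv_lt_one_of_one_lt₀ (by exact_mod_cast hp.out.one_lt)
  obtain ⟨c, d, rfl⟩ := exists_eq_add_mul_of_mem_adjoin_simple hπ hy
  intro h
  exact add_mul_pow_prime_ne_add_mul hp.out Padic.norm_p_lt_one hϖ1
    (fun x hx ↦ norm_lt_of_norm_lt_one_of_sq_eq_inv hx (norm_nonneg _) hϖ) ha hb c d (Subtype.ext h)

theorem norm_sq_sub_four_mul_pow {m : ℕ} (hm : p = 2 * m + 1) {z s : ℚ_[p]} (hz : ‖z‖ = (p : ℝ)⁻¹)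
    (hs : ‖s‖ = (p : ℝ)⁻¹ ^ (m + 1)) : ‖s ^ 2 - 4 * z ^ p‖ = (p : ℝ)⁻¹ ^ p := by
  have hp1 : (p : ℝ)⁻¹ < 1 := inv_lt_one_of_one_lt₀ (by exact_mod_cast hp.out.one_lt)
  have hp0 : 0 < (p : ℝ)⁻¹ := inv_pos.2 (by exact_mod_cast hp.out.pos)
  have h4z : ‖-(4 * z ^ p)‖ = (p : ℝ)⁻¹ ^ p := by
    rw [norm_neg, norm_mul, norm_pow, hz, show (4 : ℚ_[p]) = 2 ^ 2 by norm_num, norm_pow,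
      padic_norm_two_eq_one (by lia), one_pow, one_mul]
  have hlt : ‖s ^ 2‖ < ‖-(4 * z ^ p)‖ := by
    rw [h4z, norm_pow, hs, ← pow_mul]
    exact pow_lt_pow_right_of_lt_one₀ hp0 hp1 (by lia)
  rw [sub_eq_add_neg, IsUltrametricDist.norm_add_eq_max_of_norm_ne_norm hlt.ne,
    max_eq_right hlt.le, h4z]

theorem exists_sq_eq_norm_eq_inv {m : ℕ} (hm : p = 2 * m + 1) {L : Type*} [Field L]
    [Algebra ℚ_[p] L] {Δ : ℚ_[p]} (hΔ : ‖Δ‖ = (p : ℝ)⁻¹ ^ p) {δ : L}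
    (hδ : δ ^ 2 = algebraMap ℚ_[p] L Δ) :
    ∃ P : ℚ_[p], ‖P‖ = (p : ℝ)⁻¹ ∧ (δ / algebraMap ℚ_[p] L (p ^ m)) ^ 2 = algebraMap ℚ_[p] L P := by
  have hp0 : (p : ℝ)⁻¹ ≠ 0 := inv_ne_zero (by exact_mod_cast hp.out.ne_zero)
  refine ⟨Δ / (p ^ m) ^ 2, ?_, by rw [div_pow, hδ, ← map_pow, ← map_div₀]⟩
  rw [norm_div, hΔ, norm_pow, norm_pow, Padic.norm_p, ← pow_mul, div_eq_iff (pow_ne_zero _ hp0),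
    ← pow_succ']
  congr 1
  lia

theorem exists_norm_eq_one_eq_add_mul {m : ℕ} (hm : p = 2 * m + 1) {L : Type*} [Field L]
    [Algebra ℚ_[p] L] {s P : ℚ_[p]} (hs : ‖s‖ = (p : ℝ)⁻¹ ^ (m + 1)) (hP : ‖P‖ = (p : ℝ)⁻¹) {π : L}
    (hπ : π ^ 2 = algebraMap ℚ_[p] L P) :
    ∃ a b : ℚ_[p], ‖a‖ = 1 ∧ ‖b‖ = 1 ∧
      -(algebraMap ℚ_[p] L s + algebraMap ℚ_[p] L (p ^ m) * π) / (2 * π ^ p) =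
        algebraMap ℚ_[p] L a + algebraMap ℚ_[p] L b * π := by
  have hp0 : (p : ℝ)⁻¹ ≠ 0 := inv_ne_zero (by exact_mod_cast hp.out.ne_zero)
  have h2 : ‖(2 : ℚ_[p])‖ = 1 := padic_norm_two_eq_one (by lia)
  refine ⟨-p ^ m / 2 / P ^ m, -s / 2 / P ^ (m + 1), ?_, ?_, ?_⟩
  · rw [norm_div, norm_div, norm_neg, norm_pow, norm_pow, Padic.norm_p, hP, h2, div_one,
      div_self (pow_ne_zero _ hp0)]
  · rw [norm_div, norm_div, norm_neg, norm_pow, hs, hP, h2, div_one, div_self (pow_ne_zero _ hp0)]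
  · rw [← add_mul_div_pow_odd hπ (norm_ne_zero_iff.1 (hP ▸ hp0)), ← hm]
    simp only [map_div₀, map_neg, map_ofNat]
    ring

end Padic

theorem stmt_9_general (r : ℕ) [Fact r.Prime] {L : Type*} [Field L] [Algebra ℚ_[r] L]
    (z s : ℚ_[r]) (hz : z.valuation = 1) (hs : 2 * s.valuation = (r : ℤ) + 1)
    (sqrtD π u α₀ : L) (hsq : sqrtD ^ 2 = algebraMap ℚ_[r] L (s ^ 2 - 4 * z ^ r))
    (hπ : π = sqrtD / (r : L) ^ ((r - 1) / 2))
    (hu : u = -(algebraMap ℚ_[r] L s + sqrtD) / (2 * π ^ r))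
    (hα : α₀ ^ r = -(algebraMap ℚ_[r] L s + sqrtD) / 2) :
    (α₀ / π) ^ r = u ∧
    ∃ hmem : u ∈ IntermediateField.adjoin ℚ_[r] {sqrtD},
      Irreducible (X ^ r -
        C (⟨u, hmem⟩ : IntermediateField.adjoin ℚ_[r] {sqrtD})) ∧
      minpoly (IntermediateField.adjoin ℚ_[r] {sqrtD}) (α₀ / π) =
        X ^ r - C (⟨u, hmem⟩ : IntermediateField.adjoin ℚ_[r] {sqrtD}) ∧
      IntermediateField.adjoin ℚ_[r] {α₀} =
        IntermediateField.adjoin ℚ_[r] {sqrtD, α₀ / π} := by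
  have hr : r.Prime := Fact.out
  obtain ⟨m, hm⟩ : ∃ m, r = 2 * m + 1 := ⟨r / 2, by lia⟩
  have hzn : ‖z‖ = (r : ℝ)⁻¹ := by simpa using padic_norm_eq_inv_pow_of_valuation_eq one_ne_zero hz
  have hsn := padic_norm_eq_inv_pow_of_valuation_eq m.succ_ne_zero (x := s) (by push_cast; lia)
  have hπ' : π = sqrtD / algebraMap ℚ_[r] L (r ^ m) := by simp [hπ, show (r - 1) / 2 = m by lia]
  obtain ⟨P, hP, hπP⟩ := exists_sq_eq_norm_eq_inv hm (norm_sq_sub_four_mul_pow hm hzn hsn) hsq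
  rw [← hπ'] at hπP
  obtain ⟨a, b, ha, hb, hab⟩ := exists_norm_eq_one_eq_add_mul hm hsn hP hπP
  have hrm : (r : ℚ_[r]) ^ m ≠ 0 := pow_ne_zero m (by exact_mod_cast hr.ne_zero)
  have hπ0 : π ≠ 0 := by
    rintro rfl
    simp [(map_eq_zero _).1 (hπP.symm.trans (zero_pow two_ne_zero)), hr.ne_zero, eq_comm] at hP
  have huab : u = algebraMap ℚ_[r] L a + algebraMap ℚ_[r] L b * π := by
    rw [hu, ← hab, hπ', mul_div_cancel₀ _ (by simpa only [ne_eq, map_eq_zero] using hrm)]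
  have hF : ℚ_[r]⟮π⟯ = ℚ_[r]⟮sqrtD⟯ := hπ' ▸ adjoin_simple_div_algebraMap sqrtD hrm
  have hπF : π ∈ ℚ_[r]⟮sqrtD⟯ := hF.le (IntermediateField.mem_adjoin_simple_self _ π)
  have hmem : u ∈ ℚ_[r]⟮sqrtD⟯ :=
    huab ▸ add_mem (algebraMap_mem _ a) (mul_mem (algebraMap_mem _ b) hπF)
  have hroot : (α₀ / π) ^ r = u := by rw [div_pow, hα, hu, div_div]
  have hirr : Irreducible (X ^ r - C (⟨u, hmem⟩ : ℚ_[r]⟮sqrtD⟯)) :=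
    X_pow_sub_C_irreducible_of_prime hr fun y hy ↦
      pow_prime_ne_of_mem_adjoin hπP hP ha.le hb (hF.ge y.2)
        ((congrArg Subtype.val hy).trans huab)
  have : CharZero L := charZero_of_injective_algebraMap (algebraMap ℚ_[r] L).injective
  exact ⟨hroot, hmem, hirr, minpoly_eq_X_pow_sub_C_of_irreducible hr.ne_zero hroot hirr,
    adjoin_simple_eq_adjoin_pair_div (mem_adjoin_simple_of_pow_eq_neg_add_div_two hα) hπF hπ0⟩

/-- **Lemma 5.18.** Let `r ≥ 5` be a prime and `z, s` nonzero integers with `v_r(z) = 1` and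
`v_r(s) = (r+1)/2`.  Let `Δ = s² - 4z^r`, `√Δ` a square root of `Δ` in an algebraic closure
of `ℚ_r`, `F′ = ℚ_r(√Δ)`, `π = √Δ / r^((r-1)/2)`, `u = -(s + √Δ)/(2π^r)`, and `α₀` with
`α₀^r = -(s + √Δ)/2`.  Then `(α₀/π)^r = u`, the polynomial `X^r - u` is irreducible over
`F′` and is the minimal polynomial of `α₀/π` over `F′`, and `ℚ_r(α₀) = F′(α₀/π)`. -/
theorem stmt_9 (r : ℕ) [Fact r.Prime] (hr : 5 ≤ r)
    (z s : ℤ) (hz0 : z ≠ 0) (hs0 : s ≠ 0)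
    (hz : ((z : ℚ_[r])).valuation = 1)
    (hs : 2 * ((s : ℚ_[r])).valuation = (r : ℤ) + 1)
    (sqrtD π u α₀ : AlgebraicClosure ℚ_[r])
    (hsq : sqrtD ^ 2 = ((s ^ 2 - 4 * z ^ r : ℤ) : AlgebraicClosure ℚ_[r]))
    (hπ : π = sqrtD / (r : AlgebraicClosure ℚ_[r]) ^ ((r - 1) / 2))
    (hu : u = -(((s : ℤ) : AlgebraicClosure ℚ_[r]) + sqrtD) / (2 * π ^ r))
    (hα : α₀ ^ r = -(((s : ℤ) : AlgebraicClosure ℚ_[r]) + sqrtD) / 2) :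
    (α₀ / π) ^ r = u ∧
    ∃ hmem : u ∈ IntermediateField.adjoin ℚ_[r] {sqrtD},
      Irreducible (X ^ r -
        C (⟨u, hmem⟩ : IntermediateField.adjoin ℚ_[r] {sqrtD})) ∧
      minpoly (IntermediateField.adjoin ℚ_[r] {sqrtD}) (α₀ / π) =
        X ^ r - C (⟨u, hmem⟩ : IntermediateField.adjoin ℚ_[r] {sqrtD}) ∧
      IntermediateField.adjoin ℚ_[r] {α₀} =
        IntermediateField.adjoin ℚ_[r] {sqrtD, α₀ / π} := by
  simpa using stmt_9_general r (z : ℚ_[r]) s hz hs sqrtD π u α₀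
    (by simp [hsq, map_ofNat (algebraMap ℚ_[r] _)]) hπ (by simpa using hu) (by simpa using hα)
end
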